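/- arXiv:2101.09386 — 2 statements merged into one kernel-verified Lean document; each statement's English description precedes it below -/
import Mathlib

section
/- Let K be a field, n ≥ 1, and let Γ be a finitely generated subgroup of GL_n(K). Then every commutative subgroup Δ of Γ all of whose elements are semi-simple is finitely generated. -/
open Matrix

/-- An element of `GL n K` is semi-simple if the corresponding linear endomorphism
of `K^n` is a semisimple endomorphism. -/
def IsSemisimpleElt {n : ℕ} {K : Type*} [Field K] (g : GL (Fin n) K) : Prop :=
  Module.End.IsSemisimple ((g : Matrix (Fin n) (Fin n) K).mulVecLin)


lemma fg_iff_aux (G : Type*) [CommGroup G] : Group.FG G ↔ Module.Finite ℤ (Additive G) := by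
  rw [Module.Finite.iff_addGroup_fg, Group.fg_iff_monoid_fg, Monoid.fg_iff_add_fg,
    ← AddGroup.fg_iff_addMonoid_fg]

lemma fg_of_hom {G H : Type*} [CommGroup G] [CommGroup H] (f : G →* H) (hH : Group.FG H)
    (hk : Group.FG f.ker) : Group.FG G := by
  rw [fg_iff_aux] at hH ⊢
  rw [Module.finite_def]
  refine Submodule.fg_of_fg_map_of_fg_inf_ker (MonoidHom.toAdditive f).toIntLinearMap
    (IsNoetherian.noetherian _) ?_
  rw [inf_of_le_right le_top, AddMonoidHom.coe_toIntLinearMap_ker, MonoidHom.coe_toAdditive_ker,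
      Submodule.fg_iff_addSubgroup_fg,
      AddSubgroup.toIntSubmodule_toAddSubgroup, ← AddGroup.fg_iff_addSubgroup_fg]
  have h := (fg_iff_aux _).1 hk
  rw [Module.Finite.iff_addGroup_fg] at h
  exact h

lemma fg_of_inj {G H : Type*} [CommGroup G] [CommGroup H] (f : G →* H) (hH : Group.FG H)
    (hf : Function.Injective f) : Group.FG G := by
  refine fg_of_hom f hH ?_
  rw [(MonoidHom.ker_eq_bot_iff f).2 hf]
  infer_instance

lemma fg_pi {ι : Type*} [Finite ι] (H : ι → Type*) [∀ i, CommGroup (H i)]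
    (h : ∀ i, Group.FG (H i)) : Group.FG (∀ i, H i) := by
  rw [fg_iff_aux]
  have := fun i => (fg_iff_aux _).1 (h i)
  have h2 : Module.Finite ℤ (∀ i, Additive (H i)) := inferInstance
  exact Module.Finite.equiv
    (AddEquiv.toIntLinearEquiv
      ({ toFun := fun x => Additive.ofMul fun i => (x i).toMul
         invFun := fun x i => Additive.ofMul (x.toMul i)
         left_inv := fun _ => rfl
         right_inv := fun _ => rfl
         map_add' := fun _ _ => rfl } : (∀ i, Additive (H i)) ≃+ Additive (∀ i, H i)))

open WithZero in
lemma fg_of_val {G L : Type*} [CommGroup G] [Field L] {ι : Type*} [Finite ι]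
    (v : ι → Valuation L ℤᵐ⁰) (φ : G →* L) (H : Subgroup G) (hH : Group.FG H)
    (h : ∀ g, (∀ i, v i (φ g) = 1) → g ∈ H) : Group.FG G := by
  let ψ : G →* (∀ _ : ι, ℤᵐ⁰ˣ) := MonoidHom.pi fun i =>
    (Units.map (v i : L →* ℤᵐ⁰)).comp φ.toHomUnits
  refine fg_of_hom ψ ?_ ?_
  · apply fg_pi
    intro i
    have e : ℤᵐ⁰ˣ ≃* Multiplicative ℤ := WithZero.unitsWithZeroEquiv
    exact fg_of_inj e.toMonoidHom inferInstance e.injective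
  · refine fg_of_inj (H := H) (Subgroup.inclusion ?_) hH (Subgroup.inclusion_injective _)
    intro g hg
    apply h
    intro i
    have := congrFun (MonoidHom.mem_ker.1 hg) i
    exact congrArg Units.val this


lemma mem_valSub_of_integral {R L : Type*} [CommRing R] [Field L] [Algebra R L]
    (W : ValuationSubring L) (h : ∀ r : R, algebraMap R L r ∈ W) {u : L} (hu : IsIntegral R u) :
    u ∈ W := by
  obtain ⟨p, hp, hpu⟩ := hu
  let f : R →+* W := (algebraMap R L).codRestrict W.toSubring h
  have : IsIntegral W u := by
    refine ⟨p.map f, hp.map f, ?_⟩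
    rw [Polynomial.eval₂_map]
    exact hpu
  obtain ⟨y, hy⟩ := IsIntegrallyClosed.isIntegral_iff.1 this
  rw [← hy]
  exact y.2

open WithZero IsDedekindDomain in
lemma val_lemma_sep (A K L : Type*) [CommRing A] [IsDedekindDomain A] [Field K]
    [Algebra A K] [IsFractionRing A K] [Field L] [Algebra K L] [Algebra A L] [IsScalarTower A K L]
    [FiniteDimensional K L] [Algebra.IsSeparable K L] (T : Set L) (hT : T.Finite) :
    ∃ V : Set (Valuation L ℤᵐ⁰), V.Finite ∧
      ∃ V' : Set (Valuation L ℤᵐ⁰), (∀ v ∈ V', (∀ t ∈ T, v t ≤ 1) ∧ ∀ a, v (algebraMap A L a) ≤ 1) ∧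
      ∀ u : L, (∀ v ∈ V, v u ≤ 1) → (∀ v ∈ V', v u ≤ 1) → IsIntegral A u := by
  let O := integralClosure A L
  have : IsDedekindDomain O := integralClosure.isDedekindDomain A K L
  have : IsFractionRing O L := integralClosure.isFractionRing_of_finite_extension K L
  let S : Set (HeightOneSpectrum O) := ⋃ t ∈ T, HeightOneSpectrum.Support O t
  have hS : S.Finite := hT.biUnion fun t _ => HeightOneSpectrum.Support.finite O t
  refine ⟨(fun P => P.valuation L) '' S, hS.image _,
    (fun P => P.valuation L) '' Sᶜ, ?_, ?_⟩
  · rintro _ ⟨P, hP, rfl⟩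
    refine ⟨fun t ht => ?_, fun a => ?_⟩
    · by_contra hc
      exact hP (Set.mem_biUnion ht (not_le.1 hc))
    · rw [IsScalarTower.algebraMap_apply A O L]
      exact P.valuation_le_one _
  · intro u h1 h2
    obtain ⟨y, hy⟩ := HeightOneSpectrum.mem_integers_of_valuation_le_one (R := O) L u (fun P => by
      by_cases hP : P ∈ S
      · exact h1 _ ⟨P, hP, rfl⟩
      · exact h2 _ ⟨P, hP, rfl⟩)
    rw [← hy]
    exact y.2

open WithZero IsDedekindDomain in
lemma val_lemma (A K L : Type*) [CommRing A] [IsDedekindDomain A] [Field K]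
    [Algebra A K] [IsFractionRing A K] [Field L] [Algebra K L] [Algebra A L] [IsScalarTower A K L]
    [FiniteDimensional K L] (T : Set L) (hT : T.Finite) :
    ∃ V : Set (Valuation L ℤᵐ⁰), V.Finite ∧ ∀ u : L, IsIntegral (Algebra.adjoin A T) u →
      (∀ v ∈ V, v u ≤ 1) → IsIntegral A u := by
  obtain ⟨p, hp⟩ := ExpChar.exists K
  let M := separableClosure K L
  have : ExpChar M p := expChar_of_injective_algebraMap (algebraMap K M).injective p
  let q := p ^ IsPurelyInseparable.exponent M L
  have hq : 0 < q := expChar_pow_pos K p _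
  let φ : L →+* M := IsPurelyInseparable.iterateFrobenius M L p le_rfl
  have hφ : ∀ a, (φ a : L) = a ^ q := fun a =>
    IsPurelyInseparable.algebraMap_iterateFrobenius M p le_rfl a
  obtain ⟨V, hV, V', hV', h⟩ := val_lemma_sep A K M (φ '' T) (hT.image _)
  refine ⟨(fun v => v.comap φ) '' V, hV.image _, ?_⟩
  intro u hu hu1
  have key : IsIntegral A (φ u) := by
    apply h
    · intro v hv
      exact hu1 _ ⟨v, hv, rfl⟩
    · intro v hv
      let W := (v.comap φ).valuationSubring
      obtain ⟨ht, ha⟩ := hV' v hv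
      have hA : ∀ a : A, algebraMap A L a ∈ W := by
        intro a
        change v (φ (algebraMap A L a)) ≤ 1
        have : φ (algebraMap A L a) = algebraMap A M a ^ q := by
          apply Subtype.ext
          rw [hφ]
          rfl
        rw [this, map_pow]
        exact pow_le_one₀ zero_le (ha a)
      refine mem_valSub_of_integral W ?_ hu
      rintro ⟨r, hr⟩
      change r ∈ W
      induction hr using Algebra.adjoin_induction with
      | mem x hx => exact ht _ ⟨x, hx, rfl⟩
      | algebraMap r => exact hA r
      | add x y _ _ hx hy => exact add_mem hx hy
      | mul x y _ _ hx hy => exact mul_mem hx hy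
  have h2 : IsIntegral A (u ^ q) := by
    rw [← hφ]
    have : IsScalarTower A M L := IsScalarTower.of_algebraMap_eq fun _ => rfl
    exact key.map (IsScalarTower.toAlgHom A M L)
  exact h2.of_pow hq

lemma integral_of_both {F L : Type*} [Field F] [Field L] [Algebra F L] (x u : L)
    (h1 : IsIntegral (Algebra.adjoin F {x}) u) (h2 : IsIntegral (Algebra.adjoin F {x⁻¹}) u) :
    IsIntegral F u := by
  let R : Subring L := (integralClosure F L).toSubring
  have : IsIntegrallyClosedIn R L :=
    inferInstanceAs (IsIntegrallyClosedIn (integralClosure F L) L)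
  by_contra hu
  obtain ⟨W, hW, huW⟩ := Subring.exists_le_valuationSubring_of_isIntegrallyClosedIn (x := u) (R := R) hu
  have hF : ∀ a, algebraMap F L a ∈ W := fun a =>
    hW (show IsIntegral F (algebraMap F L a) from isIntegral_algebraMap)
  have hy : ∀ y ∈ W, IsIntegral (Algebra.adjoin F {y}) u → u ∈ W := by
    intro y hy hi
    refine mem_valSub_of_integral W ?_ hi
    rintro ⟨r, hr⟩
    change r ∈ W
    induction hr using Algebra.adjoin_induction with
    | mem x hx => rw [Set.mem_singleton_iff.1 hx]; exact hy
    | algebraMap r => exact hF r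
    | add x y _ _ hx hy => exact add_mem hx hy
    | mul x y _ _ hx hy => exact mul_mem hx hy
  rcases W.mem_or_inv_mem x with h | h
  · exact huW (hy _ h h1)
  · exact huW (hy _ h h2)

lemma findim_of_ess (K L : Type*) [Field K] [Field L] [Algebra K L] [Algebra.EssFiniteType K L]
    [Algebra.IsAlgebraic K L] : FiniteDimensional K L := by
  obtain ⟨s, hs⟩ := IntermediateField.fg_top (F := K) (E := L)
  have : FiniteDimensional K (IntermediateField.adjoin K (s : Set L)) :=
    IntermediateField.finiteDimensional_adjoin fun x _ => Algebra.IsIntegral.isIntegral x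
  rw [hs] at this
  exact Module.Finite.equiv (IntermediateField.topEquiv (F := K) (E := L)).toLinearEquiv

open Polynomial in
lemma adjoin_dedekind (F L : Type*) [Field F] [Field L] [Algebra F L] (x : L) :
    IsDedekindDomain (Algebra.adjoin F {x}) := by
  have hs : Function.Surjective (((aeval x : F[X] →ₐ[F] L).codRestrict (Algebra.adjoin F {x})
      (fun p => aeval_mem_adjoin_singleton F x))) := by
    rintro ⟨y, hy⟩
    rw [Algebra.adjoin_singleton_eq_range_aeval] at hy
    obtain ⟨p, hp⟩ := hy
    exact ⟨p, Subtype.ext hp⟩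
  have : IsPrincipalIdealRing (Algebra.adjoin F {x}) :=
    IsPrincipalIdealRing.of_surjective _ hs
  infer_instance

lemma integral_mono {R S L : Type*} [CommRing R] [CommRing S] [Field L] [Algebra R L] [Algebra S L]
    (hS : Function.Injective (algebraMap S L))
    (h : ∀ r : R, ∃ s : S, algebraMap S L s = algebraMap R L r) {u : L} (hu : IsIntegral R u) :
    IsIntegral S u := by
  choose f hf using h
  let g : R →+* S :=
    { toFun := f
      map_one' := hS (by simp [hf])
      map_zero' := hS (by simp [hf])
      map_add' := fun a b => hS (by simp [hf])
      map_mul' := fun a b => hS (by simp [hf]) }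
  obtain ⟨p, hp, hpu⟩ := hu
  refine ⟨p.map g, hp.map g, ?_⟩
  rw [Polynomial.eval₂_map]
  have : (algebraMap S L).comp g = algebraMap R L := RingHom.ext hf
  rw [this]
  exact hpu

open scoped IntermediateField.algebraAdjoinAdjoin in
open WithZero IntermediateField in
lemma step_field (F L : Type*) [Field F] [Field L] [Algebra F L] [Algebra.EssFiniteType F L] (x : L)
    [Algebra.IsAlgebraic F⟮x⟯ L] (T : Set L) (hT : T.Finite) :
    ∃ V : Set (Valuation L ℤᵐ⁰), V.Finite ∧ ∀ u ∈ Algebra.adjoin F T,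
      (∀ v ∈ V, v u ≤ 1) → IsIntegral F u := by
  have aux : ∀ (y : L) (_ : F⟮y⟯ = F⟮x⟯) (T : Set L) (_ : T.Finite),
      ∃ V : Set (Valuation L ℤᵐ⁰), V.Finite ∧
        ∀ u : L, IsIntegral (Algebra.adjoin (Algebra.adjoin F {y}) T) u →
        (∀ v ∈ V, v u ≤ 1) → IsIntegral (Algebra.adjoin F {y}) u := by
    intro y hy T hT
    have h1 : Algebra.IsAlgebraic F⟮y⟯ L := by rw [hy]; infer_instance
    have : Algebra.EssFiniteType F⟮y⟯ L := Algebra.EssFiniteType.of_comp F _ _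
    have := findim_of_ess F⟮y⟯ L
    have := adjoin_dedekind F L y
    exact val_lemma (Algebra.adjoin F {y}) F⟮y⟯ L T hT
  obtain ⟨V1, hV1, h1⟩ := aux x rfl T hT
  have hxx : F⟮x⁻¹⟯ = F⟮x⟯ := by
    apply le_antisymm
    · rw [adjoin_simple_le_iff]
      exact inv_mem (mem_adjoin_simple_self F x)
    · rw [adjoin_simple_le_iff]
      simpa using inv_mem (mem_adjoin_simple_self F x⁻¹)
  obtain ⟨V2, hV2, h2⟩ := aux x⁻¹ hxx {x} (Set.finite_singleton x)
  refine ⟨V1 ∪ V2, hV1.union hV2, fun u hu huV => ?_⟩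
  have i1 : IsIntegral (Algebra.adjoin F {x}) u := by
    refine h1 u ?_ fun v hv => huV v (Or.inl hv)
    have : u ∈ Algebra.adjoin (Algebra.adjoin F {x}) T := by
      have : Algebra.adjoin F T ≤ (Algebra.adjoin (Algebra.adjoin F {x}) T).restrictScalars F :=
        Algebra.adjoin_le Algebra.subset_adjoin
      exact this hu
    exact isIntegral_algebraMap (x := (⟨u, this⟩ : Algebra.adjoin (Algebra.adjoin F {x}) T))
  refine integral_of_both x u i1 ?_
  refine h2 u ?_ fun v hv => huV v (Or.inr hv)
  refine integral_mono Subtype.val_injective ?_ i1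
  rintro ⟨r, hr⟩
  have : Algebra.adjoin F {x} ≤ (Algebra.adjoin (Algebra.adjoin F {x⁻¹}) {x}).restrictScalars F :=
        Algebra.adjoin_le Algebra.subset_adjoin
  exact ⟨⟨r, this hr⟩, rfl⟩

/-- All domains algebraic and of finite type over `D` have finitely generated unit group. -/
def UnitsFGOver.{u, v} (D : Type v) [CommRing D] : Prop :=
  ∀ (B : Type u) [CommRing B] [IsDomain B] [Algebra D B], Function.Injective (algebraMap D B) →
    Algebra.FiniteType D B → Algebra.IsAlgebraic D B → Group.FG Bˣ

lemma exists_spec.{u, v} (D F : Type v) (C : Type u) [CommRing D] [IsDomain D] [Field F]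
    [Algebra D F] [IsFractionRing D F] [CommRing C] [Nontrivial C] [Algebra F C] [Algebra D C]
    [IsScalarTower D F C] [Algebra.FiniteType F C] :
    ∃ (κ : Type u) (_ : Field κ) (_ : Algebra D κ) (_ : C →ₐ[D] κ),
      Algebra.IsAlgebraic D κ ∧ Function.Injective (algebraMap D κ) := by
  obtain ⟨m, hm⟩ := Ideal.exists_maximal C
  let _ : Field (C ⧸ m) := Ideal.Quotient.field m
  have hfin : Module.Finite F (C ⧸ m) := finite_of_finite_type_of_isJacobsonRing F (C ⧸ m)
  refine ⟨C ⧸ m, inferInstance, inferInstance, Ideal.Quotient.mkₐ D m, ?_, ?_⟩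
  · exact (IsFractionRing.comap_isAlgebraic_iff (A := D) (K := F)).2
      (Algebra.IsAlgebraic.of_finite F (C ⧸ m))
  · rw [IsScalarTower.algebraMap_eq D F (C ⧸ m)]
    exact (algebraMap F (C ⧸ m)).injective.comp (IsFractionRing.injective D F)

open WithZero IntermediateField in
lemma step_units.{u, v} (D : Type v) [CommRing D] [IsDomain D] (hP : UnitsFGOver.{u, v} D)
    (B : Type u) [CommRing B] [IsDomain B] [Algebra D B]
    (hinj : Function.Injective (algebraMap D B))
    [Algebra.FiniteType D B] (x : B) (hx : ∀ b : B, IsAlgebraic (Algebra.adjoin D {x}) b) :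
    Group.FG Bˣ := by
  let L := FractionRing B
  let F := FractionRing D
  have hBL : Function.Injective (algebraMap B L) := IsFractionRing.injective B L
  have hDL : Function.Injective (algebraMap D L) := by
    rw [IsScalarTower.algebraMap_eq D B L]
    exact hBL.comp hinj
  have : FaithfulSMul D L := (faithfulSMul_iff_algebraMap_injective D L).2 hDL
  let _ : Algebra F L := FractionRing.liftAlgebra D L
  have : Algebra.EssFiniteType B L := Algebra.EssFiniteType.of_isLocalization _ (nonZeroDivisors B)
  have : Algebra.EssFiniteType D L := Algebra.EssFiniteType.comp D B L
  have : Algebra.EssFiniteType F L := Algebra.EssFiniteType.of_comp D F L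
  let y : L := algebraMap B L x
  have hDF : ∀ d : D, algebraMap D L d = algebraMap F L (algebraMap D F d) := fun d =>
    IsScalarTower.algebraMap_apply D F L d
  have halg : Algebra.IsAlgebraic F⟮y⟯ L := by
    have hmem : ∀ r : Algebra.adjoin D {x}, algebraMap B L r ∈ F⟮y⟯ := by
      rintro ⟨r, hr⟩
      change algebraMap B L r ∈ F⟮y⟯
      induction hr using Algebra.adjoin_induction with
      | mem z hz => rw [Set.mem_singleton_iff.1 hz]; exact mem_adjoin_simple_self F y
      | algebraMap d =>
        rw [← IsScalarTower.algebraMap_apply D B L, hDF]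
        exact F⟮y⟯.algebraMap_mem _
      | add a b _ _ ha hb => rw [map_add]; exact add_mem ha hb
      | mul a b _ _ ha hb => rw [map_mul]; exact mul_mem ha hb
    let f : Algebra.adjoin D {x} →+* F⟮y⟯ :=
      ((algebraMap B L).comp (Algebra.adjoin D {x}).val.toRingHom).codRestrict
        F⟮y⟯.toSubfield.toSubring hmem
    have hf : Function.Injective f := by
      intro a b hab
      exact Subtype.ext (hBL (congrArg Subtype.val hab))
    have hB : ∀ b : B, IsAlgebraic F⟮y⟯ (algebraMap B L b) := by
      intro b
      obtain ⟨p, hp0, hp⟩ := hx b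
      refine ⟨p.map f, (Polynomial.map_ne_zero_iff hf).2 hp0, ?_⟩
      rw [Polynomial.aeval_def, Polynomial.eval₂_map]
      have : (algebraMap F⟮y⟯ L).comp f = (algebraMap B L).comp (algebraMap (Algebra.adjoin D {x}) B) :=
        rfl
      rw [this, ← Polynomial.hom_eval₂, ← Polynomial.aeval_def, hp, map_zero]
    refine ⟨fun l => ?_⟩
    obtain ⟨a, b, -, rfl⟩ := IsFractionRing.div_surjective (A := B) l
    rw [div_eq_mul_inv]
    exact (hB a).mul (hB b).inv
  obtain ⟨s, hs⟩ := (‹Algebra.FiniteType D B›).out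
  let T : Set L := algebraMap B L '' s
  have hT : T.Finite := s.finite_toSet.image _
  let C := Algebra.adjoin F T
  have hBC : ∀ b : B, algebraMap B L b ∈ C := by
    intro b
    have hb : b ∈ Algebra.adjoin D (s : Set B) := by rw [hs]; trivial
    induction hb using Algebra.adjoin_induction with
    | mem z hz => exact Algebra.subset_adjoin ⟨z, hz, rfl⟩
    | algebraMap d =>
      rw [← IsScalarTower.algebraMap_apply D B L, hDF]
      exact C.algebraMap_mem _
    | add a b _ _ ha hb => rw [map_add]; exact add_mem ha hb
    | mul a b _ _ ha hb => rw [map_mul]; exact mul_mem ha hb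
  obtain ⟨V, hV, hVu⟩ := step_field F L y T hT
  have : Finite V := hV
  let H : Subgroup Bˣ :=
    { carrier := {u | IsIntegral F (algebraMap B L u)}
      one_mem' := by simpa using isIntegral_one
      mul_mem' := fun {a b} ha hb => by
        simp only [Set.mem_ofPred_eq, Units.val_mul, map_mul] at *
        exact ha.mul hb
      inv_mem' := fun {a} ha => by
        simp only [Set.mem_ofPred_eq] at *
        have : algebraMap B L (a⁻¹ : Bˣ) = (algebraMap B L a)⁻¹ := by
          apply eq_inv_of_mul_eq_one_left
          rw [← map_mul]
          simp
        rw [this]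
        exact ha.inv }
  refine fg_of_val (fun v : V => v.1) ((algebraMap B L : B →* L).comp (Units.coeHom B)) H ?_ ?_
  swap
  · intro u hu
    exact hVu _ (hBC u) fun v hv => (hu ⟨v, hv⟩).le
  have : Algebra.FiniteType F C :=
    (Subalgebra.fg_iff_finiteType _).1 ⟨hT.toFinset, by simp [C]⟩
  have : IsScalarTower D F C := IsScalarTower.of_algebraMap_eq fun d => Subtype.ext (hDF d)
  obtain ⟨κ, _, _, g0, halgκ, hDκ⟩ := exists_spec D F C
  let g : B →ₐ[D] κ := g0.comp
    ((IsScalarTower.toAlgHom D B L).codRestrict (C.restrictScalars D) hBC)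
  have hB' : Group.FG (g.range)ˣ := by
    refine hP _ ?_ ?_ ?_
    · intro a b hab
      exact hDκ (congrArg Subtype.val hab)
    · exact Algebra.FiniteType.of_surjective g.rangeRestrict g.rangeRestrict_surjective
    · refine ⟨fun b => ?_⟩
      exact (isAlgebraic_algHom_iff g.range.val Subtype.val_injective).1 (halgκ.1 _)
  refine fg_of_inj ((Units.map (g.rangeRestrict : B →* g.range)).comp H.subtype) hB' ?_
  rw [← MonoidHom.ker_eq_bot_iff, eq_bot_iff]
  rintro ⟨u, hu⟩ hk
  have hgu : g u = 1 := congrArg (fun z => (Units.val z).1) (MonoidHom.mem_ker.1 hk)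
  have hu1 : (u : B) - 1 = 0 := by
    by_contra hne
    have h1 : IsIntegral F (algebraMap B L ((u : B) - 1)) := by
      rw [map_sub, map_one]
      exact IsIntegral.sub hu isIntegral_one
    have h2 : IsAlgebraic D (algebraMap B L ((u : B) - 1)) :=
      (IsFractionRing.isAlgebraic_iff D F L).2 h1.isAlgebraic
    have h3 : IsAlgebraic D ((u : B) - 1) := (isAlgebraic_algebraMap_iff hBL).1 h2
    obtain ⟨r, hr, hdvd⟩ := h3.exists_nonzero_dvd (mem_nonZeroDivisors_of_ne_zero hne)
    have h4 := map_dvd g hdvd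
    rw [map_sub, hgu, map_one, sub_self, zero_dvd_iff, AlgHom.commutes] at h4
    exact hr (hDκ (by rw [h4, map_zero]))
  rw [Subgroup.mem_bot]
  exact Subtype.ext (Units.ext (sub_eq_zero.1 hu1))

lemma algebraic_mono {R S L : Type*} [CommRing R] [CommRing S] [CommRing L] [Algebra R L]
    [Algebra S L]
    (hR : Function.Injective (algebraMap R L)) (hS : Function.Injective (algebraMap S L))
    (h : ∀ r : R, ∃ s : S, algebraMap S L s = algebraMap R L r) {u : L} (hu : IsAlgebraic R u) :
    IsAlgebraic S u := by
  choose f hf using h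
  let g : R →+* S :=
    { toFun := f
      map_one' := hS (by simp [hf])
      map_zero' := hS (by simp [hf])
      map_add' := fun a b => hS (by simp [hf])
      map_mul' := fun a b => hS (by simp [hf]) }
  have hg : (algebraMap S L).comp g = algebraMap R L := RingHom.ext hf
  have hgi : Function.Injective g := by
    have : Function.Injective ((algebraMap S L).comp g) := by rw [hg]; exact hR
    exact Function.Injective.of_comp this
  obtain ⟨p, hp, hpu⟩ := hu
  refine ⟨p.map g, (Polynomial.map_ne_zero_iff hgi).2 hp, ?_⟩
  rw [Polynomial.aeval_def, Polynomial.eval₂_map, hg]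
  exact hpu

open Polynomial in
lemma unitsFG_polynomial.{u, v} (D : Type v) [CommRing D] [IsDomain D]
    (hP : UnitsFGOver.{u, v} D) : UnitsFGOver.{u, v} D[X] := by
  intro B _ _ _ hinj hft halg
  let _ : Algebra D B := ((algebraMap D[X] B).comp C).toAlgebra
  have : IsScalarTower D D[X] B := IsScalarTower.of_algebraMap_eq fun _ => rfl
  have : Algebra.FiniteType D B := Algebra.FiniteType.trans (S := D[X]) inferInstance hft
  refine step_units D hP B (hinj.comp C_injective) (algebraMap D[X] B X) fun b => ?_
  refine algebraic_mono hinj Subtype.val_injective ?_ (halg.1 b)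
  intro r
  refine ⟨⟨algebraMap D[X] B r, ?_⟩, rfl⟩
  have : algebraMap D[X] B r = aeval (algebraMap D[X] B X) r := by
    rw [aeval_algebraMap_apply, aeval_X_left_apply]
  rw [this]
  exact aeval_mem_adjoin_singleton D _

lemma unitsFG_equiv.{u, v} (D D' : Type v) [CommRing D] [CommRing D'] (e : D ≃+* D')
    (hP : UnitsFGOver.{u, v} D) : UnitsFGOver.{u, v} D' := by
  intro B _ _ _ hinj hft halg
  let _ : Algebra D B := ((algebraMap D' B).comp (e : D →+* D')).toAlgebra
  have hD : Function.Injective (algebraMap D B) := hinj.comp e.injective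
  refine hP B hD ?_ ⟨fun b => ?_⟩
  · have h1 : (algebraMap D' B).FiniteType := RingHom.finiteType_algebraMap.2 hft
    have h2 : (e : D →+* D').FiniteType := RingHom.FiniteType.of_surjective _ e.surjective
    exact RingHom.finiteType_algebraMap.1 (h1.comp h2)
  · refine algebraic_mono hinj hD (fun r => ⟨e.symm r, ?_⟩) (halg.1 b)
    change algebraMap D' B (e (e.symm r)) = _
    rw [e.apply_symm_apply]

lemma unitsFG_mvPolynomial.{u, v} (k : Type v) [CommRing k] [IsDomain k]
    (hP : UnitsFGOver.{u, v} k) (n : ℕ) : UnitsFGOver.{u, v} (MvPolynomial (Fin n) k) := by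
  induction n with
  | zero => exact unitsFG_equiv _ _ (MvPolynomial.isEmptyRingEquiv k (Fin 0)).symm hP
  | succ n ih =>
    exact unitsFG_equiv _ _ (MvPolynomial.finSuccEquiv k n).symm.toRingEquiv
      (unitsFG_polynomial _ ih)

lemma unitsFG_of_finiteType.{u, v} (k : Type v) [CommRing k] [IsDomain k]
    (hP : UnitsFGOver.{u, v} k) (B : Type u) [CommRing B] [IsDomain B] [Algebra k B]
    (hinj : Function.Injective (algebraMap k B)) (hft : Algebra.FiniteType k B) :
    Group.FG Bˣ := by
  obtain ⟨s, hs⟩ := hft.out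
  have : FaithfulSMul k B := (faithfulSMul_iff_algebraMap_injective k B).2 hinj
  have : Algebra.IsAlgebraic (Algebra.adjoin k (s : Set B)) B := by
    refine ⟨fun b => ?_⟩
    have hb : b ∈ Algebra.adjoin k (s : Set B) := by rw [hs]; trivial
    exact isAlgebraic_algebraMap (⟨b, hb⟩ : Algebra.adjoin k (s : Set B))
  obtain ⟨t, hts, ht⟩ := exists_isTranscendenceBasis_subset (R := k) (s : Set B)
  have : Finite t := s.finite_toSet.subset hts
  obtain ⟨n, ⟨e⟩⟩ := Finite.exists_equiv_fin t
  have hx : IsTranscendenceBasis k ((fun i : t => (i : B)) ∘ e.symm) := ht.comp_equiv e.symm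
  set x := (fun i : t => (i : B)) ∘ e.symm
  let _ : Algebra (MvPolynomial (Fin n) k) B := (MvPolynomial.aeval x).toRingHom.toAlgebra
  have : IsScalarTower k (MvPolynomial (Fin n) k) B := IsScalarTower.of_algebraMap_eq fun r =>
    ((MvPolynomial.aeval x).commutes r).symm
  have hi : Function.Injective (algebraMap (MvPolynomial (Fin n) k) B) := hx.1
  refine unitsFG_mvPolynomial k hP n B hi ?_ ⟨fun b => ?_⟩
  · exact Algebra.FiniteType.of_restrictScalars_finiteType k _ B
  · refine algebraic_mono Subtype.val_injective hi ?_ (hx.isAlgebraic.1 b)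
    rintro ⟨r, hr⟩
    rw [Algebra.adjoin_range_eq_range_aeval] at hr
    obtain ⟨p, hp⟩ := hr
    exact ⟨p, hp⟩

lemma unitsFG_zmod.{u} (p : ℕ) [Fact p.Prime] : UnitsFGOver.{u, 0} (ZMod p) := by
  intro B _ _ _ hinj hft halg
  have : Module.Finite (ZMod p) B := Algebra.IsIntegral.finite
  have : Finite B := Module.finite_of_finite (ZMod p)
  infer_instance

open WithZero NumberField in
lemma unitsFG_int.{u} : UnitsFGOver.{u, 0} ℤ := by
  intro B _ _ iA hinj hft halg
  obtain rfl : iA = Ring.toIntAlgebra B := Subsingleton.elim _ _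
  obtain ⟨L, _, _, _⟩ : ∃ (L : Type u) (_ : Field L) (_ : Algebra B L), IsFractionRing B L :=
    ⟨FractionRing B, inferInstance, inferInstance, inferInstance⟩
  have hBL : Function.Injective (algebraMap B L) := IsFractionRing.injective B L
  have hDL : Function.Injective (algebraMap ℤ L) := by
    rw [IsScalarTower.algebraMap_eq ℤ B L]
    exact hBL.comp hinj
  have : CharZero L := ⟨fun a b hab => by
    have := @hDL a b (by simpa using hab)
    exact_mod_cast this⟩
  have : Algebra.EssFiniteType B L := Algebra.EssFiniteType.of_isLocalization _ (nonZeroDivisors B)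
  have : Algebra.EssFiniteType ℤ L := Algebra.EssFiniteType.comp ℤ B L
  have : Algebra.EssFiniteType ℚ L := Algebra.EssFiniteType.of_comp ℤ ℚ L
  have hZL : Algebra.IsAlgebraic ℤ L := by
    have : Algebra.IsAlgebraic B L := IsLocalization.isAlgebraic L (nonZeroDivisors B)
    exact Algebra.IsAlgebraic.trans ℤ B L
  have : Algebra.IsAlgebraic ℚ L := (IsFractionRing.comap_isAlgebraic_iff (A := ℤ) (K := ℚ)).1 hZL
  have := findim_of_ess ℚ L
  have : NumberField L := { }
  obtain ⟨s, hs⟩ := hft.out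
  let T : Set L := algebraMap B L '' s
  have hT : T.Finite := s.finite_toSet.image _
  obtain ⟨V, hV, hVu⟩ := val_lemma ℤ ℚ L T hT
  have : Finite V := hV
  have hBC : ∀ b : B, algebraMap B L b ∈ Algebra.adjoin ℤ T := by
    intro b
    have hb : b ∈ Algebra.adjoin ℤ (s : Set B) := by rw [hs]; trivial
    induction hb using Algebra.adjoin_induction with
    | mem z hz => exact Algebra.subset_adjoin ⟨z, hz, rfl⟩
    | algebraMap d =>
      rw [← IsScalarTower.algebraMap_apply ℤ B L]
      exact Subalgebra.algebraMap_mem _ _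
    | add a b _ _ ha hb => rw [map_add]; exact add_mem ha hb
    | mul a b _ _ ha hb => rw [map_mul]; exact mul_mem ha hb
  have key : ∀ b : B, (∀ v ∈ V, v (algebraMap B L b) ≤ 1) → IsIntegral ℤ (algebraMap B L b) :=
    fun b hb => hVu _ (isIntegral_algebraMap
      (x := (⟨_, hBC b⟩ : Algebra.adjoin ℤ T))) hb
  let α : (𝓞 L)ˣ →* Lˣ := Units.map (algebraMap (𝓞 L) L : 𝓞 L →* L)
  let β : Bˣ →* Lˣ := Units.map (algebraMap B L : B →* L)
  have hβ : Function.Injective β := Units.map_injective hBL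
  have hα : Group.FG α.range := by
    have : Group.FG (𝓞 L)ˣ := Group.fg_iff_monoid_fg.2 inferInstance
    infer_instance
  refine fg_of_val (fun v : V => v.1) ((algebraMap B L : B →* L).comp (Units.coeHom B))
    (α.range.comap β) ?_ ?_
  · refine fg_of_inj ((β.comp (α.range.comap β).subtype).codRestrict α.range fun x => x.2) hα ?_
    intro a b hab
    exact Subtype.ext (hβ (congrArg Subtype.val hab))
  · intro u hu
    have hv : ∀ v ∈ V, v (algebraMap B L u) = 1 := fun v hv => hu ⟨v, hv⟩
    have hmul : algebraMap B L u * algebraMap B L (u⁻¹ : Bˣ) = 1 := by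
      rw [← map_mul]; simp
    have h1 := key u fun v h => (hv v h).le
    have h2 := key (u⁻¹ : Bˣ) fun v h => by
      have := congrArg v hmul
      rw [map_mul, hv v h, one_mul, map_one] at this
      exact this.le
    refine ⟨⟨⟨_, h1⟩, ⟨_, h2⟩, ?_, ?_⟩, ?_⟩
    · exact Subtype.ext hmul
    · exact Subtype.ext (by rw [mul_comm] at hmul; exact hmul)
    · exact Units.ext rfl

lemma units_fg.{u} (B : Type u) [CommRing B] [IsDomain B] (hft : Algebra.FiniteType ℤ B) :
    Group.FG Bˣ := by
  obtain ⟨p, hp⟩ := CharP.exists B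
  rcases CharP.char_is_prime_or_zero B p with h | h
  · have : Fact p.Prime := ⟨h⟩
    let _ : Algebra (ZMod p) B := ZMod.algebra B p
    exact unitsFG_of_finiteType (ZMod p) (unitsFG_zmod p) B (algebraMap (ZMod p) B).injective
      (Algebra.FiniteType.of_restrictScalars_finiteType ℤ _ B)
  · subst h
    have : CharZero B := CharP.charP_to_charZero B
    exact unitsFG_of_finiteType ℤ unitsFG_int B (by simpa using Int.cast_injective) hft

lemma fg_of_ring {A G : Type*} [CommRing A] [CommGroup G] (hft : Algebra.FiniteType ℤ A)
    (φ : G →* A) (hφ : ∀ g, IsNilpotent (φ g - 1) → g = 1) : Group.FG G := by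
  have : IsNoetherianRing A := Algebra.FiniteType.isNoetherianRing ℤ A
  have hfin : (minimalPrimes A).Finite := minimalPrimes.finite_of_isNoetherianRing A
  have : Finite (minimalPrimes A) := hfin
  have hp : ∀ p : minimalPrimes A, p.1.IsPrime := fun p => p.2.1.1
  let ψ : G →* (∀ p : minimalPrimes A, (A ⧸ p.1)ˣ) := MonoidHom.pi fun p =>
    (Units.map (Ideal.Quotient.mk p.1 : A →* A ⧸ p.1)).comp φ.toHomUnits
  refine fg_of_inj ψ (fg_pi _ fun p => ?_) ?_
  · have : IsDomain (A ⧸ p.1) := Ideal.Quotient.isDomain _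
    refine units_fg (A ⧸ p.1) ?_
    exact Algebra.FiniteType.of_surjective ((Ideal.Quotient.mk p.1).toIntAlgHom)
      Ideal.Quotient.mk_surjective
  · rw [← MonoidHom.ker_eq_bot_iff, eq_bot_iff]
    intro g hg
    rw [Subgroup.mem_bot]
    apply hφ
    rw [← mem_nilradical]
    change φ g - 1 ∈ (⊥ : Ideal A).radical
    rw [← Ideal.sInf_minimalPrimes, Submodule.mem_sInf]
    intro p hpm
    have := congrFun (MonoidHom.mem_ker.1 hg) ⟨p, hpm⟩
    have h2 : Ideal.Quotient.mk p (φ g) = 1 := congrArg Units.val this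
    rw [← Ideal.Quotient.eq_zero_iff_mem, map_sub, h2, map_one, sub_self]

/-- Every commutative subgroup consisting of semi-simple elements of a finitely generated
linear group is finitely generated (over any field `K`). -/
theorem stmt_12 {K : Type*} [Field K] {n : ℕ} (hn : 1 ≤ n)
    (Γ : Subgroup (GL (Fin n) K)) (hΓ : Group.FG ↥Γ)
    (Δ : Subgroup (GL (Fin n) K)) (hle : Δ ≤ Γ)
    (hcomm : ∀ x ∈ Δ, ∀ y ∈ Δ, x * y = y * x)
    (hss : ∀ g ∈ Δ, IsSemisimpleElt g) :
    Group.FG ↥Δ := by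
  obtain ⟨S, hS⟩ := (Group.fg_iff_subgroup_fg Γ).1 hΓ
  let E : Set K := ⋃ g ∈ S, ((Set.range fun ij : Fin n × Fin n => g.1 ij.1 ij.2) ∪
    (Set.range fun ij : Fin n × Fin n => (g⁻¹).1 ij.1 ij.2))
  have hE : E.Finite := S.finite_toSet.biUnion fun g _ =>
    (Set.finite_range _).union (Set.finite_range _)
  let R : Subalgebra ℤ K := Algebra.adjoin ℤ E
  have hone : ∀ i j, (1 : Matrix (Fin n) (Fin n) K) i j ∈ R := fun i j => by
    rw [Matrix.one_apply]
    split_ifs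
    · exact one_mem R
    · exact zero_mem R
  have hmul : ∀ M N : Matrix (Fin n) (Fin n) K, (∀ i j, M i j ∈ R) → (∀ i j, N i j ∈ R) →
      ∀ i j, (M * N) i j ∈ R := fun M N hM hN i j => by
    rw [Matrix.mul_apply]
    exact sum_mem fun k _ => mul_mem (hM _ _) (hN _ _)
  have hent : ∀ g ∈ Γ, (∀ i j, g.1 i j ∈ R) ∧ (∀ i j, (g⁻¹).1 i j ∈ R) := by
    intro g hg
    rw [← hS] at hg
    induction hg using Subgroup.closure_induction with
    | mem g hg =>
      refine ⟨fun i j => Algebra.subset_adjoin ?_, fun i j => Algebra.subset_adjoin ?_⟩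
      · exact Set.mem_biUnion hg (Or.inl ⟨(i, j), rfl⟩)
      · exact Set.mem_biUnion hg (Or.inr ⟨(i, j), rfl⟩)
    | one =>
      rw [inv_one]
      exact ⟨hone, hone⟩
    | mul a b _ _ ha hb =>
      rw [_root_.mul_inv_rev]
      exact ⟨hmul _ _ ha.1 hb.1, hmul _ _ hb.2 ha.2⟩
    | inv a _ ha =>
      rw [inv_inv]
      exact ⟨ha.2, ha.1⟩
  have hRft : Algebra.FiniteType ℤ R :=
    (Subalgebra.fg_iff_finiteType _).1 ⟨hE.toFinset, by simp [R]⟩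
  have : IsNoetherianRing R := Algebra.FiniteType.isNoetherianRing ℤ R
  let Dm : Set (Matrix (Fin n) (Fin n) K) := (fun g : GL (Fin n) K => g.1) '' Δ
  let A : Subalgebra R (Matrix (Fin n) (Fin n) K) := Algebra.adjoin R Dm
  have hA : ∀ M ∈ A, ∀ i j, M i j ∈ R := by
    intro M hM
    induction hM using Algebra.adjoin_induction with
    | mem x hx =>
      obtain ⟨g, hg, rfl⟩ := hx
      exact (hent g (hle hg)).1
    | algebraMap r =>
      intro i j
      rw [Matrix.algebraMap_matrix_apply]
      split_ifs
      · exact r.2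
      · exact zero_mem R
    | add x y _ _ hx hy => exact fun i j => add_mem (hx i j) (hy i j)
    | mul x y _ _ hx hy => exact hmul x y hx hy
  have hAfin : Module.Finite R A := by
    let f : A →ₗ[R] (Fin n → Fin n → R) :=
      { toFun := fun M i j => ⟨M.1 i j, hA M.1 M.2 i j⟩
        map_add' := fun _ _ => rfl
        map_smul' := fun _ _ => rfl }
    refine Module.Finite.of_injective f fun M N h => ?_
    apply Subtype.ext
    ext i j
    exact congrArg Subtype.val (congrFun (congrFun h i) j)
  have hAft : Algebra.FiniteType ℤ A :=
    Algebra.FiniteType.trans (S := R) hRft inferInstance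
  let _ : CommRing A := Algebra.adjoinCommRingOfComm R (by
    rintro _ ⟨a, ha, rfl⟩ _ ⟨b, hb, rfl⟩
    exact congrArg Units.val (hcomm a ha b hb))
  let _ : CommGroup Δ :=
    { (inferInstance : Group Δ) with
      mul_comm := fun a b => Subtype.ext (hcomm a.1 a.2 b.1 b.2) }
  let φ : Δ →* A :=
    { toFun := fun g => ⟨g.1.1, Algebra.subset_adjoin ⟨g.1, g.2, rfl⟩⟩
      map_one' := rfl
      map_mul' := fun _ _ => rfl }
  refine fg_of_ring (A := A) hAft φ ?_
  rintro ⟨g, hg⟩ ⟨k, hk⟩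
  have h1 : (g.1 - 1) ^ k = 0 := congrArg Subtype.val hk
  have h2 : IsNilpotent (g.1.mulVecLin - algebraMap K (Module.End K (Fin n → K)) 1) := by
    refine ⟨k, ?_⟩
    have : g.1.mulVecLin - algebraMap K (Module.End K (Fin n → K)) 1
        = Matrix.toLinAlgEquiv' (g.1 - 1) := by
      rw [map_sub, map_one, map_one]
      rfl
    rw [this, ← map_pow, h1, map_zero]
  have h3 := Module.End.eq_zero_of_isNilpotent_isSemisimple h2
    (Module.End.isSemisimple_sub_algebraMap_iff.2 (hss g hg))
  apply Subtype.ext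
  apply Units.ext
  have h4 : Matrix.toLinAlgEquiv' g.1 = Matrix.toLinAlgEquiv' (1 : Matrix (Fin n) (Fin n) K) := by
    rw [map_one]
    rw [map_one] at h3
    exact sub_eq_zero.1 h3
  exact Matrix.toLinAlgEquiv'.injective h4
end

section
/- Let K be a field of characteristic zero, n ≥ 1, and let Γ be a finitely generated subgroup of GL_n(K) all of whose elements are semi-simple (an anisotropic linear group). If there exist finitely many abelian subgroups A₁, …, A_k of Γ such that every element of Γ can be written as a product a₁⋯a_k with a_i ∈ A_i, then Γ is virtually abelian. -/
open Matrix

/-- A group is virtually abelian if it has an abelian subgroup of finite index. -/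
def IsVirtuallyAbelian (G : Type*) [Group G] : Prop :=
  ∃ H : Subgroup G, H.FiniteIndex ∧ ∀ x y : ↥H, x * y = y * x

section NTPart
open NumberField


lemma euler_fin {α : Type*} [CommMonoidWithZero α] [UniqueFactorizationMonoid α]
    [Subsingleton αˣ]
    (f : α → ℝ) (f1 : f 1 = 1) (fm : ∀ a b, f (a * b) = f a * f b) (f0 : ∀ a, 0 ≤ f a)
    (W : Finset α) (hW : ∀ q ∈ W, Prime q ∧ f q < 1) :
    ∀ T : Finset α, (∀ I ∈ T, I ≠ 0 ∧ ∀ q, Prime q → q ∣ I → q ∈ W) →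
      ∑ I ∈ T, f I ≤ ∏ q ∈ W, (1 - f q)⁻¹ := by
  classical
  have fpow : ∀ a (k : ℕ), f (a ^ k) = f a ^ k := by
    intro a k
    induction k with
    | zero => simp [f1]
    | succ k ih => rw [pow_succ, fm, ih, pow_succ]
  induction W using Finset.induction_on with
  | empty =>
    intro T hT
    have : T ⊆ {1} := by
      intro I hI
      obtain ⟨h0, h⟩ := hT I hI
      by_contra hne
      have hu : ¬ IsUnit I := by
        intro hu
        apply hne
        simpa using isUnit_iff_eq_one.mp hu
      obtain ⟨q, hq, hqI⟩ := WfDvdMonoid.exists_irreducible_factor hu h0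
      simpa using h q hq.prime hqI
    calc ∑ I ∈ T, f I ≤ ∑ I ∈ {1}, f I := Finset.sum_le_sum_of_subset_of_nonneg this (fun _ _ _ => f0 _)
      _ = _ := by simp [f1]
  | insert p W hp ih =>
    intro T hT
    have hpp := (hW p (Finset.mem_insert_self _ _)).1
    have hp1 := (hW p (Finset.mem_insert_self _ _)).2
    have key : ∀ I : T, ∃ kJ : ℕ × α, ¬ p ∣ kJ.2 ∧ (I : α) = p ^ kJ.1 * kJ.2 := by
      intro I
      have := FiniteMultiplicity.of_not_isUnit hpp.not_isUnit (hT I I.2).1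
      obtain ⟨c, hc, hc'⟩ := this.exists_eq_pow_mul_and_not_dvd
      exact ⟨(_, c), hc', hc⟩
    choose g hg1 hg2 using key
    have hinj : Function.Injective g := by
      intro I J h
      apply Subtype.ext
      rw [hg2 I, hg2 J, h]
    set T' : Finset α := Finset.univ.image (fun I => (g I).2)
    obtain ⟨N, hN⟩ : ∃ N : ℕ, ∀ I, (g I).1 < N := by
      refine ⟨Finset.univ.sup (fun I => (g I).1) + 1, fun I => ?_⟩
      exact Nat.lt_succ_of_le (Finset.le_sup (f := fun I => (g I).1) (Finset.mem_univ I))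
    have ih' := ih (fun q hq => hW q (Finset.mem_insert_of_mem hq)) T' (by
      intro J hJ
      obtain ⟨I, -, rfl⟩ := Finset.mem_image.mp hJ
      have h0 := (hT I I.2).1
      rw [hg2 I] at h0
      refine ⟨right_ne_zero_of_mul h0, fun q hq hqI => ?_⟩
      have := (hT I I.2).2 q hq (by rw [hg2 I]; exact hqI.mul_left _)
      rcases Finset.mem_insert.mp this with rfl | h
      · exact absurd hqI (hg1 I)
      · exact h)
    calc ∑ I ∈ T, f I = ∑ I : T, f I := (Finset.sum_coe_sort T f).symm
      _ = ∑ I : T, (fun x : ℕ × α => f p ^ x.1 * f x.2) (g I) := by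
        refine Finset.sum_congr rfl fun I _ => ?_
        simp only
        conv_lhs => rw [hg2 I, fm, fpow]
      _ = ∑ x ∈ Finset.univ.image g, f p ^ x.1 * f x.2 := by
        rw [Finset.sum_image (fun _ _ _ _ h => hinj h)]
      _ ≤ ∑ x ∈ Finset.range N ×ˢ T', f p ^ x.1 * f x.2 := by
        refine Finset.sum_le_sum_of_subset_of_nonneg ?_ (fun _ _ _ => mul_nonneg (pow_nonneg (f0 _) _) (f0 _))
        intro x hx
        obtain ⟨I, -, rfl⟩ := Finset.mem_image.mp hx
        exact Finset.mem_product.mpr ⟨Finset.mem_range.mpr (hN I), Finset.mem_image.mpr ⟨I, Finset.mem_univ _, rfl⟩⟩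
      _ = (∑ k ∈ Finset.range N, f p ^ k) * ∑ J ∈ T', f J := by
        rw [Finset.sum_mul_sum, Finset.sum_product]
      _ ≤ (1 - f p)⁻¹ * ∏ q ∈ W, (1 - f q)⁻¹ := by
        refine mul_le_mul ?_ ih' (Finset.sum_nonneg fun _ _ => f0 _) (by rw [inv_nonneg]; linarith)
        rw [← tsum_geometric_of_lt_one (f0 p) hp1]
        exact (summable_geometric_of_lt_one (f0 p) hp1).sum_le_tsum _ (fun _ _ => pow_nonneg (f0 _) _)
      _ = _ := by rw [Finset.prod_insert hp]

/-- number of primes above p -/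
lemma card_primes_above (L : Type*) [Field L] [NumberField L] (p : ℕ) (hp : p.Prime)
    (W : Finset (Ideal (𝓞 L))) (hW : ∀ q ∈ W, Prime q ∧ (p : 𝓞 L) ∈ q) :
    W.card ≤ Module.finrank ℚ L := by
  have h1 : ∏ q ∈ W, q ∣ Ideal.span {(p : 𝓞 L)} := by
    apply Finset.prod_primes_dvd
    · intro q hq; exact (hW q hq).1
    · intro q hq
      rw [Ideal.dvd_span_singleton]; exact (hW q hq).2
  have h2 : Ideal.absNorm (∏ q ∈ W, q) ∣ p ^ Module.finrank ℤ (𝓞 L) := by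
    rw [← Ideal.absNorm_span_natCast]
    exact map_dvd _ h1
  have h3 : p ^ W.card ∣ Ideal.absNorm (∏ q ∈ W, q) := by
    rw [map_prod, ← Finset.prod_const]
    apply Finset.prod_dvd_prod_of_dvd
    intro q hq
    have hqp := (hW q hq).1
    have hmax : q.IsMaximal := (Ideal.isPrime_of_prime hqp).isMaximal hqp.ne_zero
    obtain ⟨l, i, hi, -, hl, hle⟩ := Ideal.exists_prime_and_absNorm_eq_pow q
    have hd : Ideal.absNorm q ∣ p ^ Module.finrank ℤ (𝓞 L) := by
      rw [← Ideal.absNorm_span_natCast]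
      exact map_dvd _ (Ideal.dvd_span_singleton.mpr (hW q hq).2)
    rw [hle] at hd ⊢
    have : l ∣ p := hl.dvd_of_dvd_pow ((dvd_pow_self l hi.ne').trans hd)
    rw [(Nat.prime_dvd_prime_iff_eq hl hp).mp this]
    exact dvd_pow_self p hi.ne'
  have := Nat.pow_dvd_pow_iff_le_right hp.one_lt |>.mp (h3.trans h2)
  rwa [RingOfIntegers.rank] at this

/-- `p` is a prime with a residue degree one prime above it. -/
def degOne (L : Type*) [Field L] [NumberField L] (p : ℕ) : Prop :=
  p.Prime ∧ Nonempty (𝓞 L →+* ZMod p)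

open Classical in
/-- The indicator Dirichlet series term. -/
noncomputable def dterm (L : Type*) [Field L] [NumberField L] (s : ℝ) (p : ℕ) : ℝ :=
  if degOne L p then (p : ℝ) ^ (-s) else 0

lemma dterm_nonneg (L : Type*) [Field L] [NumberField L] (s : ℝ) (p : ℕ) : 0 ≤ dterm L s p := by
  unfold dterm; split_ifs <;> positivity

lemma dterm_summable (L : Type*) [Field L] [NumberField L] {s : ℝ} (hs : 1 < s) :
    Summable (dterm L s) := by
  refine Summable.of_nonneg_of_le (dterm_nonneg L s) (fun p => ?_)
    (Real.summable_nat_rpow (p := -s) |>.mpr (by linarith))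
  unfold dterm; split_ifs
  · exact le_rfl
  · positivity

lemma prime_ideal_bound (L : Type*) [Field L] [NumberField L] {s : ℝ} (hs : 1 < s)
    (q : Ideal (𝓞 L)) (hq : Prime q) :
    (Ideal.absNorm q : ℝ) ^ (-s) ≤ 1 / 2 ∧
    ∃ p : ℕ, p.Prime ∧ (p : 𝓞 L) ∈ q ∧
      (Ideal.absNorm q : ℝ) ^ (-s) + 2 * ((Ideal.absNorm q : ℝ) ^ (-s)) ^ 2 ≤
        dterm L s p + 3 * (p : ℝ) ^ (-2 : ℝ) := by
  have hmax : q.IsMaximal := (Ideal.isPrime_of_prime hq).isMaximal hq.ne_zero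
  obtain ⟨p, i, hi, hpq, hp, hN⟩ := Ideal.exists_prime_and_absNorm_eq_pow q
  have hp2 : (2 : ℝ) ≤ p := by exact_mod_cast hp.two_le
  have hNp : (p : ℝ) ≤ Ideal.absNorm q := by
    rw [hN]; exact_mod_cast Nat.le_self_pow hi.ne' p
  have e1 : (Ideal.absNorm q : ℝ) ^ (-s) ≤ (p : ℝ) ^ (-s) :=
    Real.rpow_le_rpow_of_nonpos (by linarith) hNp (by linarith)
  have e2 : (p : ℝ) ^ (-s) ≤ (p : ℝ) ^ (-1 : ℝ) :=
    Real.rpow_le_rpow_of_exponent_le (by linarith) (by linarith)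
  have e3 : (p : ℝ) ^ (-2 : ℝ) = ((p : ℝ) ^ (-1 : ℝ)) ^ 2 := by
    rw [← Real.rpow_natCast, ← Real.rpow_mul (by linarith)]; norm_num
  have e4 : 0 ≤ (Ideal.absNorm q : ℝ) ^ (-s) := by positivity
  have e5 : ((Ideal.absNorm q : ℝ) ^ (-s)) ^ 2 ≤ (p : ℝ) ^ (-2 : ℝ) := by
    rw [e3]; exact pow_le_pow_left₀ e4 (e1.trans e2) 2
  refine ⟨?_, p, hp, hpq, ?_⟩
  · refine (e1.trans e2).trans ?_
    rw [Real.rpow_neg_one, one_div]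
    exact inv_anti₀ (by norm_num) hp2
  rcases Nat.lt_or_ge 1 i with h | h
  · have : (Ideal.absNorm q : ℝ) ^ (-s) ≤ (p : ℝ) ^ (-2 : ℝ) := by
      have h2 : ((p : ℝ) ^ 2) ≤ Ideal.absNorm q := by
        rw [hN]; exact_mod_cast Nat.pow_le_pow_right hp.pos h
      calc (Ideal.absNorm q : ℝ) ^ (-s) ≤ ((p : ℝ) ^ 2) ^ (-s) :=
            Real.rpow_le_rpow_of_nonpos (by positivity) h2 (by linarith)
        _ = (p : ℝ) ^ (2 * (-s)) := by
            rw [← Real.rpow_natCast, ← Real.rpow_mul (by linarith)]; norm_num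
        _ ≤ _ := Real.rpow_le_rpow_of_exponent_le (by linarith) (by linarith)
    have := dterm_nonneg L s p
    linarith
  · have hi1 : i = 1 := by omega
    subst hi1
    rw [pow_one] at hN
    have hd : degOne L p := by
      refine ⟨hp, ?_⟩
      have hc : Nat.card (𝓞 L ⧸ q) = p := by rw [← hN]; rfl
      have : Finite (𝓞 L ⧸ q) := Nat.finite_of_card_ne_zero (by rw [hc]; exact hp.ne_zero)
      have := Fintype.ofFinite (𝓞 L ⧸ q)
      rw [Nat.card_eq_fintype_card] at hc
      exact ⟨((ZMod.ringEquivOfPrime _ hp hc).symm : _ →+* _).comp (Ideal.Quotient.mk q)⟩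
    have : dterm L s p = (Ideal.absNorm q : ℝ) ^ (-s) := by
      unfold dterm; rw [if_pos hd, hN]
    have h6 : 0 ≤ (p : ℝ) ^ (-2 : ℝ) := by positivity
    linarith

lemma prod_bound (L : Type*) [Field L] [NumberField L] {s : ℝ} (hs : 1 < s)
    (W : Finset (Ideal (𝓞 L))) (hW : ∀ q ∈ W, Prime q) :
    ∏ q ∈ W, (1 - (Ideal.absNorm q : ℝ) ^ (-s))⁻¹ ≤
      Real.exp (Module.finrank ℚ L * (∑' p, dterm L s p + 3 * ∑' p : ℕ, (p : ℝ) ^ (-2 : ℝ))) := by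
  classical
  have hsum2 : Summable (fun p : ℕ => (p : ℝ) ^ (-2 : ℝ)) :=
    Real.summable_nat_rpow.mpr (by norm_num)
  set h : ℕ → ℝ := fun p => dterm L s p + 3 * (p : ℝ) ^ (-2 : ℝ) with hh
  have hh0 : ∀ p, 0 ≤ h p := fun p => add_nonneg (dterm_nonneg _ _ _) (by positivity)
  have hhs : Summable h := (dterm_summable L hs).add (hsum2.mul_left 3)
  have htot : ∑' p, h p = ∑' p, dterm L s p + 3 * ∑' p : ℕ, (p : ℝ) ^ (-2 : ℝ) := by
    rw [← tsum_mul_left, ← (dterm_summable L hs).tsum_add (hsum2.mul_left 3)]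
  rw [← htot]
  choose! P hP1 hP2 hP3 using fun q hq => (prime_ideal_bound L hs q hq).2
  calc ∏ q ∈ W, (1 - (Ideal.absNorm q : ℝ) ^ (-s))⁻¹
      ≤ ∏ q ∈ W, Real.exp (h (P q)) := by
        refine Finset.prod_le_prod ?_ ?_
        · intro q hq
          have := (prime_ideal_bound L hs q (hW q hq)).1
          rw [inv_nonneg]; linarith
        · intro q hq
          have h1 := (prime_ideal_bound L hs q (hW q hq)).1
          have h2 := hP3 q (hW q hq)
          set x := (Ideal.absNorm q : ℝ) ^ (-s)
          have hx0 : 0 ≤ x := by positivity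
          have hpos : 0 < 1 - x := by linarith
          have : (1 - x)⁻¹ ≤ Real.exp (x + 2 * x ^ 2) := by
            have e : (1 - x)⁻¹ ≤ (x + 2 * x ^ 2) + 1 := by
              rw [inv_le_iff_one_le_mul₀ hpos]
              nlinarith [mul_nonneg (sq_nonneg x) (by linarith : 0 ≤ 1 - 2 * x)]
            exact e.trans (Real.add_one_le_exp _)
          exact this.trans (Real.exp_le_exp.mpr h2)
    _ = Real.exp (∑ q ∈ W, h (P q)) := (Real.exp_sum _ _).symm
    _ ≤ _ := by
      apply Real.exp_le_exp.mpr
      calc ∑ q ∈ W, h (P q) = ∑ p ∈ W.image P, ∑ q ∈ W with P q = p, h (P q) :=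
            (Finset.sum_fiberwise_of_maps_to (fun q hq => Finset.mem_image_of_mem P hq) _).symm
        _ ≤ ∑ p ∈ W.image P, (Module.finrank ℚ L : ℝ) * h p := by
            refine Finset.sum_le_sum fun p hp => ?_
            have : ∑ q ∈ W with P q = p, h (P q) = ∑ q ∈ W with P q = p, h p := by
              refine Finset.sum_congr rfl fun q hq => ?_
              rw [(Finset.mem_filter.mp hq).2]
            rw [this, Finset.sum_const, nsmul_eq_mul]
            refine mul_le_mul_of_nonneg_right ?_ (hh0 p)
            obtain ⟨q0, hq0, rfl⟩ := Finset.mem_image.mp hp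
            exact_mod_cast card_primes_above L (P q0) (hP1 q0 (hW q0 hq0)) _ (by
              intro q hq
              rw [Finset.mem_filter] at hq
              refine ⟨hW q hq.1, ?_⟩
              rw [← hq.2]
              exact hP2 q (hW q hq.1))
        _ = (Module.finrank ℚ L : ℝ) * ∑ p ∈ W.image P, h p := by rw [Finset.mul_sum]
        _ ≤ _ := mul_le_mul_of_nonneg_left (hhs.sum_le_tsum _ (fun _ _ => hh0 _)) (by positivity)

lemma ideal_sum_bound (L : Type*) [Field L] [NumberField L] {s : ℝ} (hs : 1 < s)
    (T : Finset (Ideal (𝓞 L))) (hT : ∀ I ∈ T, I ≠ 0) :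
    ∑ I ∈ T, (Ideal.absNorm I : ℝ) ^ (-s) ≤
      Real.exp (Module.finrank ℚ L * (∑' p, dterm L s p + 3 * ∑' p : ℕ, (p : ℝ) ^ (-2 : ℝ))) := by
  classical
  set W : Finset (Ideal (𝓞 L)) :=
    T.biUnion (fun I => (UniqueFactorizationMonoid.normalizedFactors I).toFinset)
  have hWp : ∀ q ∈ W, Prime q := by
    intro q hq
    obtain ⟨I, -, hI⟩ := Finset.mem_biUnion.mp hq
    exact UniqueFactorizationMonoid.prime_of_normalized_factor q (Multiset.mem_toFinset.mp hI)
  refine le_trans ?_ (prod_bound L hs W hWp)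
  refine euler_fin (fun I : Ideal (𝓞 L) => (Ideal.absNorm I : ℝ) ^ (-s)) (by simp) ?_ ?_ W ?_ T ?_
  · intro a b
    simp only [map_mul, Nat.cast_mul]
    rw [Real.mul_rpow (by positivity) (by positivity)]
  · intro a; positivity
  · intro q hq
    exact ⟨hWp q hq, by have := (prime_ideal_bound L hs q (hWp q hq)).1; linarith⟩
  · intro I hI
    refine ⟨hT I hI, fun q hq hqI => ?_⟩
    refine Finset.mem_biUnion.mpr ⟨I, hI, Multiset.mem_toFinset.mpr ?_⟩
    obtain ⟨q', hq', ha⟩ := UniqueFactorizationMonoid.exists_mem_normalizedFactors_of_dvd (hT I hI) hq.irreducible hqI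
    rwa [associated_iff_eq.mp ha]

lemma zeta_bound (L : Type*) [Field L] [NumberField L] {s : ℝ} (hs : 1 < s) :
    ‖dedekindZeta L s‖ ≤
      Real.exp (Module.finrank ℚ L * (∑' p, dterm L s p + 3 * ∑' p : ℕ, (p : ℝ) ^ (-2 : ℝ))) := by
  classical
  set B := Real.exp (Module.finrank ℚ L * (∑' p, dterm L s p + 3 * ∑' p : ℕ, (p : ℝ) ^ (-2 : ℝ)))
  unfold dedekindZeta LSeries
  set F : ℕ → ℂ := LSeries.term (fun n => (Nat.card {I : Ideal (𝓞 L) // Ideal.absNorm I = n} : ℂ)) s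
  have hpart : ∀ N, ∑ n ∈ Finset.range N, ‖F n‖ ≤ B := by
    intro N
    have hfin : ∀ n, {I : Ideal (𝓞 L) | Ideal.absNorm I = n}.Finite := fun n =>
      Ideal.finite_setOfPred_absNorm_eq n
    have hterm : ∀ n ∈ Finset.range N, ‖F n‖ =
        ∑ I ∈ (if n = 0 then ∅ else (hfin n).toFinset), (Ideal.absNorm I : ℝ) ^ (-s) := by
      intro n _
      rcases eq_or_ne n 0 with rfl | hn
      · simp [F]
      rw [if_neg hn]
      have : ∀ I ∈ (hfin n).toFinset, (Ideal.absNorm I : ℝ) ^ (-s) = (n : ℝ) ^ (-s) := by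
        intro I hI
        have : Ideal.absNorm I = n := by simpa using hI
        rw [this]
      rw [Finset.sum_congr rfl this, Finset.sum_const, nsmul_eq_mul]
      simp only [F, LSeries.term_of_ne_zero hn, norm_div, Complex.norm_natCast]
      rw [Complex.norm_natCast_cpow_of_pos (Nat.pos_of_ne_zero hn), Complex.ofReal_re,
        Real.rpow_neg (by positivity), div_eq_mul_inv]
      congr 2
      rw [← Set.ncard_eq_toFinset_card _ (hfin n)]
      rfl
    rw [Finset.sum_congr rfl hterm, ← Finset.sum_biUnion]
    · apply ideal_sum_bound L hs
      intro I hI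
      obtain ⟨n, -, hn⟩ := Finset.mem_biUnion.mp hI
      split_ifs at hn with h0
      · simp at hn
      · have : Ideal.absNorm I = n := by simpa using hn
        rintro rfl
        simp at this
        exact h0 this.symm
    · intro a _ b _ hab
      rw [Function.onFun, Finset.disjoint_left]
      intro I hI hI'
      split_ifs at hI hI' <;> simp at hI hI'
      exact hab (hI.symm.trans hI')
  have hsm : Summable (fun n => ‖F n‖) :=
    summable_of_sum_range_le (fun _ => norm_nonneg _) hpart
  exact (norm_tsum_le_tsum_norm hsm).trans (hsm.tsum_le_of_sum_range_le hpart)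

theorem NT_A (L : Type*) [Field L] [NumberField L] :
    ∃ C : ℝ, ∀ᶠ s : ℝ in nhdsWithin 1 (Set.Ioi 1),
      Real.log (1 / (s - 1)) - C ≤ Module.finrank ℚ L * ∑' p, dterm L s p := by
  set κ := dedekindZeta_residue L
  have hκ : 0 < κ := dedekindZeta_residue_pos L
  set Z := ∑' p : ℕ, (p : ℝ) ^ (-2 : ℝ)
  refine ⟨Module.finrank ℚ L * (3 * Z) - Real.log (κ / 2), ?_⟩
  have h1 : Filter.Tendsto (fun s : ℝ => ‖((s : ℂ) - 1) * dedekindZeta L s‖)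
      (nhdsWithin 1 (Set.Ioi 1)) (nhds κ) := by
    have := (tendsto_sub_one_mul_dedekindZeta_nhdsGT L).norm
    rwa [Complex.norm_real, Real.norm_of_nonneg hκ.le] at this
  filter_upwards [h1.eventually (lt_mem_nhds (half_lt_self hκ)), self_mem_nhdsWithin] with s hs hs1
  have hs1' : (1 : ℝ) < s := hs1
  have hpos : 0 < s - 1 := by linarith
  have h2 := zeta_bound L hs1'
  have h3 : κ / 2 < (s - 1) * ‖dedekindZeta L s‖ := by
    refine hs.trans_le ?_
    rw [norm_mul]
    have : ‖(s : ℂ) - 1‖ = s - 1 := by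
      rw [← Complex.ofReal_one, ← Complex.ofReal_sub, Complex.norm_real, Real.norm_of_nonneg hpos.le]
    rw [this]
  have h4 : κ / 2 * (1 / (s - 1)) ≤ _ := le_trans (by
    rw [mul_one_div, div_le_iff₀ hpos]; linarith) h2
  have h5 := Real.log_le_log (by positivity) h4
  rw [Real.log_exp, Real.log_mul (by positivity) (by positivity)] at h5
  linarith


lemma degOne_cyclo (F : Type*) [Field F] [NumberField F] (e : ℕ) (he : e ≠ 0) (p : ℕ)
    (h : degOne (CyclotomicField e F) p) (hpe : ¬ p ∣ e) : degOne F p ∧ e ∣ p - 1 := by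
  obtain ⟨hp, ⟨ψ⟩⟩ := h
  have : Fact p.Prime := ⟨hp⟩
  have : NeZero e := ⟨he⟩
  refine ⟨⟨hp, ⟨ψ.comp (algebraMap (𝓞 F) (𝓞 (CyclotomicField e F)))⟩⟩, ?_⟩
  have hζ := (IsCyclotomicExtension.zeta_spec e F (CyclotomicField e F)).toInteger_isPrimitiveRoot
  set z := (IsCyclotomicExtension.zeta_spec e F (CyclotomicField e F)).toInteger
  have h1 : (Polynomial.cyclotomic e (𝓞 (CyclotomicField e F))).IsRoot z :=
    hζ.isRoot_cyclotomic (Nat.pos_of_ne_zero he)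
  have h2 : (Polynomial.cyclotomic e (ZMod p)).IsRoot (ψ z) := by
    rw [← Polynomial.map_cyclotomic e ψ]
    exact h1.map
  have : NeZero (e : ZMod p) := ⟨by rwa [Ne, ZMod.natCast_eq_zero_iff]⟩
  rw [Polynomial.isRoot_cyclotomic_iff] at h2
  have h3 : (ψ z) ^ (p - 1) = 1 := ZMod.pow_card_sub_one_eq_one (h2.ne_zero he)
  exact h2.dvd_of_pow_eq_one _ h3

lemma finrank_cyclo (F : Type*) [Field F] [NumberField F] (e : ℕ) (he : e ≠ 0) :
    Module.finrank ℚ (CyclotomicField e F) ≤ Module.finrank ℚ F * e.totient := by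
  have : NeZero e := ⟨he⟩
  rw [← Module.finrank_mul_finrank ℚ F (CyclotomicField e F)]
  refine Nat.mul_le_mul_left _ ?_
  have hζ := (IsCyclotomicExtension.zeta_spec e F (CyclotomicField e F))
  rw [(hζ.powerBasis F).finrank, ← Polynomial.natDegree_cyclotomic e F,
    IsPrimitiveRoot.powerBasis_dim]
  refine Polynomial.natDegree_le_of_dvd (minpoly.dvd _ _ ?_) (Polynomial.cyclotomic_ne_zero _ _)
  have := hζ.isRoot_cyclotomic (Nat.pos_of_ne_zero he)
  rw [Polynomial.aeval_def, ← Polynomial.eval_map, Polynomial.map_cyclotomic]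
  exact this

lemma gcd_eq_sum (K q : ℕ) (hK : K ≠ 0) :
    ∑ e ∈ K.divisors, (if e ∣ q then e.totient else 0) = Nat.gcd K q := by
  rw [← Nat.sum_totient (Nat.gcd K q), ← Finset.sum_filter]
  congr 1
  ext e
  simp [Nat.dvd_gcd_iff, hK]

/-- count of multiples -/
lemma count_mult (K q Y : ℕ) (hK : K ≠ 0) (hq : 0 < q) (hqY : q ≤ Y) :
    (Y : ℝ) * (Nat.gcd K q) / (2 * q) ≤ ((Finset.Icc 1 Y).filter (fun j => q ∣ K * j)).card := by
  set g := Nat.gcd K q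
  have hg : 0 < g := Nat.gcd_pos_of_pos_right _ hq
  obtain ⟨r, hr⟩ : g ∣ q := Nat.gcd_dvd_right _ _
  obtain ⟨K', hK'⟩ : g ∣ K := Nat.gcd_dvd_left _ _
  have hr0 : 0 < r := by rcases Nat.eq_zero_or_pos r with h | h; · (subst h; omega)
                         · exact h
  have hsub : ((Finset.Icc 1 Y).filter (fun j => r ∣ j)) ⊆
      ((Finset.Icc 1 Y).filter (fun j => q ∣ K * j)) := by
    intro j hj
    simp only [Finset.mem_filter] at hj ⊢
    refine ⟨hj.1, ?_⟩
    rw [hr, hK']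
    obtain ⟨c, rfl⟩ := hj.2
    exact ⟨K' * c, by ring⟩
  have hcard : ((Finset.Icc 1 Y).filter (fun j => r ∣ j)).card = Y / r := by
    have := Nat.card_multiples Y r
    have h2 := Nat.Ioc_filter_dvd_card_eq_div Y r
    rw [← h2]; rfl
  have h1 := Finset.card_le_card hsub
  rw [hcard] at h1
  have h2 : (Y : ℝ) * g / (2 * q) ≤ ((Y / r : ℕ) : ℝ) := by
    have hrY : r ≤ Y := le_trans (by rw [hr]; exact Nat.le_mul_of_pos_left _ hg) hqY
    have e1 : 1 ≤ Y / r := Nat.div_pos hrY hr0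
    have e2 : Y < r * (Y / r) + r := by
      have := Nat.div_add_mod Y r
      have := Nat.mod_lt Y hr0
      omega
    have e3 : Y ≤ 2 * r * (Y / r) := by nlinarith
    have e4 : (Y : ℝ) ≤ 2 * r * ((Y / r : ℕ) : ℝ) := by exact_mod_cast e3
    have hqr : (q : ℝ) = g * r := by exact_mod_cast hr
    have hgR : (0 : ℝ) < g := by exact_mod_cast hg
    have hrR : (0 : ℝ) < r := by exact_mod_cast hr0
    rw [hqr, div_le_iff₀ (by positivity)]
    nlinarith
  refine h2.trans ?_
  exact_mod_cast h1


open Classical in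
lemma B3a (S : ℕ → Prop) (hS : ∀ p, S p → p.Prime) (R : ℕ)
    (H : ∀ m : ℕ, 1 ≤ m → ∀ P : Finset ℕ, (∀ p ∈ P, S p ∧ p - 1 ∣ m) → ∏ p ∈ P, p ≤ m ^ R)
    (K : ℕ) (hK : K ≠ 0) (Y : ℕ) (hY : 1 ≤ Y) :
    ∑ p ∈ (Finset.range (Y + 1)).filter S, Real.log p * ((Nat.gcd K (p - 1) : ℝ) / p) ≤
      2 * R * Real.log (K * Y) := by
  have hKR : (1 : ℝ) ≤ K := by exact_mod_cast Nat.pos_of_ne_zero hK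
  have hYR : (1 : ℝ) ≤ Y := by exact_mod_cast hY
  have h1 : ∀ j ∈ Finset.Icc 1 Y,
      ∑ p ∈ (Finset.range (Y + 1)).filter S, (if p - 1 ∣ K * j then Real.log p else 0) ≤
        R * Real.log (K * Y) := by
    intro j hj
    rw [Finset.mem_Icc] at hj
    rw [← Finset.sum_filter]
    set P := ((Finset.range (Y + 1)).filter S).filter (fun p => p - 1 ∣ K * j)
    have hP : ∀ p ∈ P, S p ∧ p - 1 ∣ K * j := by
      intro p hp
      simp only [P, Finset.mem_filter] at hp
      exact ⟨hp.1.2, hp.2⟩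
    have h := H (K * j) (Nat.mul_pos (Nat.pos_of_ne_zero hK) hj.1) P hP
    rw [← Real.log_prod (fun p hp => by exact_mod_cast (hS p (hP p hp).1).ne_zero)]
    have h' : (∏ p ∈ P, (p : ℝ)) ≤ ((K * Y : ℝ)) ^ R := by
      calc (∏ p ∈ P, (p : ℝ)) = ((∏ p ∈ P, p : ℕ) : ℝ) := by push_cast; rfl
        _ ≤ (((K * j) ^ R : ℕ) : ℝ) := by exact_mod_cast h
        _ ≤ _ := by
          push_cast
          have : (j : ℝ) ≤ Y := by exact_mod_cast hj.2
          gcongr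
    rw [← Real.log_pow]
    refine Real.log_le_log (Finset.prod_pos fun p hp => ?_) h'
    exact_mod_cast (hS p (hP p hp).1).pos
  have h2 := Finset.sum_le_sum h1
  rw [Finset.sum_comm] at h2
  simp only [Finset.sum_const, Nat.card_Icc, nsmul_eq_mul, Nat.add_sub_cancel] at h2
  have h3 : ∑ p ∈ (Finset.range (Y + 1)).filter S,
      (Y / 2 : ℝ) * (Real.log p * ((Nat.gcd K (p - 1) : ℝ) / p)) ≤ Y * (R * Real.log (K * Y)) := by
    refine le_trans (Finset.sum_le_sum fun p hp => ?_) h2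
    rw [Finset.mem_filter, Finset.mem_range] at hp
    have hpp := hS p hp.2
    have hp2 := hpp.two_le
    have hc := count_mult K (p - 1) Y hK (by omega) (by omega)
    rw [← Finset.sum_filter, Finset.sum_const, nsmul_eq_mul]
    have hlog : 0 ≤ Real.log p := Real.log_natCast_nonneg p
    have hc2 : (Y : ℝ) * (Nat.gcd K (p - 1)) / (2 * p) ≤
      (Y : ℝ) * (Nat.gcd K (p - 1)) / (2 * (p - 1 : ℕ)) := by
      have e1 : (0 : ℝ) < (p - 1 : ℕ) := by exact_mod_cast (by omega : 0 < p - 1)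
      have e2 : ((p - 1 : ℕ) : ℝ) ≤ p := by exact_mod_cast (by omega : p - 1 ≤ p)
      gcongr
    calc _ = ((Y : ℝ) * (Nat.gcd K (p - 1)) / (2 * p)) * Real.log p := by
            have : (p : ℝ) ≠ 0 := by exact_mod_cast hpp.ne_zero
            field_simp
      _ ≤ _ := mul_le_mul_of_nonneg_right (hc2.trans hc) hlog
  rw [← Finset.mul_sum] at h3
  have hY0 : (0 : ℝ) < Y := by linarith
  nlinarith [h3]

/-- the block weights -/
lemma csum (J M : ℕ) : ∑ j ∈ Finset.range M, (2 : ℝ) ^ (-((2 : ℝ) ^ j / 2 ^ J)) ≤ J + 1 := by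
  have h0 : ∀ j, 0 ≤ (2 : ℝ) ^ (-((2 : ℝ) ^ j / 2 ^ J)) := fun j => by positivity
  calc ∑ j ∈ Finset.range M, (2 : ℝ) ^ (-((2 : ℝ) ^ j / 2 ^ J))
      ≤ ∑ j ∈ Finset.range (J + M), (2 : ℝ) ^ (-((2 : ℝ) ^ j / 2 ^ J)) :=
        Finset.sum_le_sum_of_subset_of_nonneg (Finset.range_mono (by omega)) (fun _ _ _ => h0 _)
    _ = ∑ j ∈ Finset.range J, (2 : ℝ) ^ (-((2 : ℝ) ^ j / 2 ^ J)) +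
        ∑ i ∈ Finset.range M, (2 : ℝ) ^ (-((2 : ℝ) ^ (J + i) / 2 ^ J)) := by
        rw [Finset.sum_range_add]
    _ ≤ ∑ j ∈ Finset.range J, (1 : ℝ) + ∑ i ∈ Finset.range M, (1 / 2 : ℝ) / 2 * (2 * (1 / 2 : ℝ) ^ i) := by
        refine add_le_add (Finset.sum_le_sum fun j _ => ?_) (Finset.sum_le_sum fun i _ => ?_)
        · apply Real.rpow_le_one_of_one_le_of_nonpos (by norm_num)
          have : (0 : ℝ) ≤ 2 ^ j / 2 ^ J := by positivity
          linarith
        · have e1 : (2 : ℝ) ^ (J + i) / 2 ^ J = 2 ^ i := by rw [pow_add]; field_simp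
          have e2 : (i : ℝ) + 1 ≤ 2 ^ i := by exact_mod_cast Nat.lt_two_pow_self
          rw [e1]
          calc (2 : ℝ) ^ (-(2 : ℝ) ^ i) ≤ (2 : ℝ) ^ (-((i + 1 : ℕ) : ℝ)) :=
                Real.rpow_le_rpow_of_exponent_le (by norm_num) (by push_cast; linarith)
            _ = _ := by
                rw [Real.rpow_neg (by norm_num), Real.rpow_natCast, pow_succ, one_div, inv_pow]
                field_simp
    _ ≤ J + 1 := by
        rw [← Finset.mul_sum, ← Finset.mul_sum]
        have := (summable_geometric_of_lt_one (r := (1 / 2 : ℝ)) (by norm_num) (by norm_num)).sum_le_tsum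
          (Finset.range M) (fun _ _ => by positivity)
        rw [tsum_geometric_of_lt_one (by norm_num) (by norm_num)] at this
        simp only [Finset.sum_const, Finset.card_range, nsmul_eq_mul, mul_one]
        norm_num at this ⊢
        linarith

open Classical in
lemma B3c (S : ℕ → Prop) (hS : ∀ p, S p → p.Prime) (R : ℕ)
    (H : ∀ m : ℕ, 1 ≤ m → ∀ P : Finset ℕ, (∀ p ∈ P, S p ∧ p - 1 ∣ m) → ∏ p ∈ P, p ≤ m ^ R)
    (K : ℕ) (hK : K ≠ 0) (J M : ℕ) :
    ∑ p ∈ (Finset.range (2 ^ 2 ^ M + 1)).filter S,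
      (Nat.gcd K (p - 1) : ℝ) * (p : ℝ) ^ (-(1 + 1 / 2 ^ J : ℝ)) ≤
      1 + (4 * R * (J + 1) + 4 * R * (Real.log K / Real.log 2)) := by
  set f : ℕ → ℝ := fun p => (Nat.gcd K (p - 1) : ℝ) * (p : ℝ) ^ (-(1 + 1 / 2 ^ J : ℝ)) with hf
  have hf0 : ∀ p, 0 ≤ f p := fun p => by positivity
  have hlog2 : 0 < Real.log 2 := Real.log_pos (by norm_num)
  have hKR : (1 : ℝ) ≤ K := by exact_mod_cast Nat.pos_of_ne_zero hK
  set t := Real.log K / Real.log 2 with ht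
  have ht0 : 0 ≤ t := div_nonneg (Real.log_nonneg hKR) hlog2.le
  set c : ℕ → ℝ := fun j => (2 : ℝ) ^ (-((2 : ℝ) ^ j / 2 ^ J)) with hc
  have hc1 : ∀ j, c j ≤ 1 := by
    intro j
    apply Real.rpow_le_one_of_one_le_of_nonpos (by norm_num)
    have : (0 : ℝ) ≤ 2 ^ j / 2 ^ J := by positivity
    linarith
  have hblock : ∀ j : ℕ, ∑ p ∈ ((Finset.range (2 ^ 2 ^ (j + 1) + 1)).filter S).filter (fun p => 2 ^ 2 ^ j < p), f p
      ≤ (4 * R + 2 * R * t * (1 / 2) ^ j) * c j := by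
    intro j
    have ha := B3a S hS R H K hK (2 ^ 2 ^ (j + 1)) Nat.one_le_two_pow
    have hlogK : Real.log (K * ((2 ^ 2 ^ (j + 1) : ℕ) : ℝ)) = (t + 2 * 2 ^ j) * Real.log 2 := by
      rw [Real.log_mul (by positivity) (by positivity)]
      push_cast
      rw [Real.log_pow, ht]
      field_simp
      push_cast
      ring
    rw [hlogK] at ha
    have hcj : 0 ≤ c j := by positivity
    have hpt : ∀ p ∈ ((Finset.range (2 ^ 2 ^ (j + 1) + 1)).filter S).filter (fun p => 2 ^ 2 ^ j < p),
        f p ≤ (Real.log p * ((Nat.gcd K (p - 1) : ℝ) / p)) * (c j / (2 ^ j * Real.log 2)) := by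
      intro p hp
      rw [Finset.mem_filter] at hp
      have hpR : ((2 : ℝ) ^ 2 ^ j) ≤ p := by exact_mod_cast hp.2.le
      have hp0 : (0 : ℝ) < p := lt_of_lt_of_le (show (0:ℝ) < (2:ℝ) ^ 2 ^ j by positivity) hpR
      have e1 : (2 : ℝ) ^ j * Real.log 2 ≤ Real.log p := by
        have := Real.log_le_log (by positivity) hpR
        rw [Real.log_pow] at this
        push_cast at this
        exact this
      have e2 : (p : ℝ) ^ (-(1 + 1 / 2 ^ J : ℝ)) ≤ (1 / p) * c j := by
        rw [neg_add, Real.rpow_add hp0, Real.rpow_neg_one, one_div (p : ℝ)]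
        refine mul_le_mul_of_nonneg_left ?_ (inv_nonneg.mpr hp0.le)
        calc (p : ℝ) ^ (-(1 / 2 ^ J : ℝ)) ≤ ((2 : ℝ) ^ 2 ^ j) ^ (-(1 / 2 ^ J : ℝ)) :=
              Real.rpow_le_rpow_of_nonpos (by positivity) hpR (by
                have : (0 : ℝ) ≤ 1 / 2 ^ J := by positivity
                linarith)
          _ = c j := by
              rw [hc, ← Real.rpow_natCast, ← Real.rpow_mul (by norm_num)]
              push_cast
              congr 1
              ring
      have hpos : (0 : ℝ) < 2 ^ j * Real.log 2 := by positivity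
      calc f p ≤ (Nat.gcd K (p - 1) : ℝ) * ((1 / p) * c j) :=
            mul_le_mul_of_nonneg_left e2 (by positivity)
        _ = (2 ^ j * Real.log 2) * ((Nat.gcd K (p - 1) : ℝ) / p) * (c j / (2 ^ j * Real.log 2)) := by
            field_simp
        _ ≤ _ := by
            refine mul_le_mul_of_nonneg_right (mul_le_mul_of_nonneg_right e1 (by positivity)) (by positivity)
    refine (Finset.sum_le_sum hpt).trans ?_
    rw [← Finset.sum_mul]
    have hle : ∑ p ∈ ((Finset.range (2 ^ 2 ^ (j + 1) + 1)).filter S).filter (fun p => 2 ^ 2 ^ j < p),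
        (Real.log p * ((Nat.gcd K (p - 1) : ℝ) / p)) ≤ 2 * R * ((t + 2 * 2 ^ j) * Real.log 2) := by
      refine le_trans (Finset.sum_le_sum_of_subset_of_nonneg (Finset.filter_subset _ _) ?_) ha
      intro p _ _
      exact mul_nonneg (Real.log_natCast_nonneg p) (by positivity)
    calc _ ≤ 2 * R * ((t + 2 * 2 ^ j) * Real.log 2) * (c j / (2 ^ j * Real.log 2)) :=
          mul_le_mul_of_nonneg_right hle (by positivity)
      _ = _ := by
          rw [one_div, inv_pow]
          field_simp
          ring
  have hind : ∀ M : ℕ, ∑ p ∈ (Finset.range (2 ^ 2 ^ M + 1)).filter S, f p ≤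
      1 + ∑ j ∈ Finset.range M, (4 * R + 2 * R * t * (1 / 2) ^ j) * c j := by
    intro M
    induction M with
    | zero =>
      simp only [pow_zero, pow_one, Finset.range_zero, Finset.sum_empty, add_zero]
      have : (Finset.range (2 + 1)).filter S ⊆ {2} := by
        intro p hp
        rw [Finset.mem_filter, Finset.mem_range] at hp
        have := (hS p hp.2).two_le
        simp; omega
      refine (Finset.sum_le_sum_of_subset_of_nonneg this (fun _ _ _ => hf0 _)).trans ?_
      simp only [Finset.sum_singleton, hf]
      norm_num
      apply Real.rpow_le_one_of_one_le_of_nonpos (by norm_num)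
      have : (0 : ℝ) ≤ (2 ^ J)⁻¹ := by positivity
      linarith
    | succ M ih =>
      rw [Finset.sum_range_succ, ← add_assoc]
      rw [← Finset.sum_filter_add_sum_filter_not _ (fun p => 2 ^ 2 ^ M < p), add_comm]
      refine add_le_add (le_trans ?_ ih) (hblock M)
      refine Finset.sum_le_sum_of_subset_of_nonneg ?_ (fun _ _ _ => hf0 _)
      intro p hp
      simp only [Finset.mem_filter, Finset.mem_range, not_lt] at hp ⊢
      exact ⟨by omega, hp.1.2⟩
  refine (hind M).trans ?_
  gcongr
  have e1 : ∑ j ∈ Finset.range M, (4 * R + 2 * R * t * (1 / 2) ^ j) * c j ≤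
      ∑ j ∈ Finset.range M, (4 * R * c j + 2 * R * t * (1 / 2) ^ j) := by
    refine Finset.sum_le_sum fun j _ => ?_
    have h1 : 2 * R * t * (1 / 2) ^ j * c j ≤ 2 * R * t * (1 / 2) ^ j :=
      mul_le_of_le_one_right (by positivity) (hc1 j)
    linarith
  refine e1.trans ?_
  rw [Finset.sum_add_distrib, ← Finset.mul_sum, ← Finset.mul_sum]
  have h2 := csum J M
  have h3 := (summable_geometric_of_lt_one (r := (1 / 2 : ℝ)) (by norm_num) (by norm_num)).sum_le_tsum
          (Finset.range M) (fun _ _ => by positivity)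
  rw [tsum_geometric_of_lt_one (by norm_num) (by norm_num)] at h3
  have h4 : 2 * R * t * ∑ j ∈ Finset.range M, (1 / 2 : ℝ) ^ j ≤ 2 * R * t * 2 :=
    mul_le_mul_of_nonneg_left (h3.trans (by norm_num)) (by positivity)
  have h5 : 4 * R * ∑ j ∈ Finset.range M, c j ≤ 4 * R * (J + 1 : ℝ) :=
    mul_le_mul_of_nonneg_left h2 (by positivity)
  linarith


lemma NT_B_low (F : Type*) [Field F] [NumberField F] (bad : Finset ℕ) (K : ℕ) (hK : K ≠ 0) :
    ∃ C : ℝ, ∀ᶠ J : ℕ in Filter.atTop, ∀ h : ℕ → ℝ, Summable h → (∀ p, 0 ≤ h p) →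
      (∀ p, degOne F p → p ∉ bad → ¬ p ∣ K →
        (Nat.gcd K (p - 1) : ℝ) * (p : ℝ) ^ (-(1 + 1 / 2 ^ J : ℝ)) ≤ h p) →
      K.divisors.card * (J * Real.log 2) - C ≤ Module.finrank ℚ F * ∑' p, h p := by
  classical
  choose C hC using fun e : ℕ => NT_A (CyclotomicField e F)
  set d := Module.finrank ℚ F with hd
  set b : ℕ → ℝ := fun p => if p ∈ bad ∪ K.divisors then 1 else 0 with hb
  have hbs : Summable b := summable_of_ne_finset_zero (s := bad ∪ K.divisors) (fun p hp => by simp only [hb, if_neg hp])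
  refine ⟨∑ e ∈ K.divisors, (C e + d * (e.totient * ∑' p, b p)), ?_⟩
  have ht : Filter.Tendsto (fun J : ℕ => (1 + 1 / 2 ^ J : ℝ)) Filter.atTop (nhdsWithin 1 (Set.Ioi 1)) := by
    rw [tendsto_nhdsWithin_iff]
    constructor
    · have h1 := (tendsto_pow_atTop_nhds_zero_of_lt_one (r := (1 / 2 : ℝ)) (by norm_num) (by norm_num)).const_add 1
      simpa using h1
    · filter_upwards with J
      have : (0 : ℝ) < 1 / 2 ^ J := by positivity
      simp only [Set.mem_Ioi]; linarith
  have hev : ∀ᶠ J : ℕ in Filter.atTop, ∀ e ∈ K.divisors,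
      Real.log (1 / ((1 + 1 / 2 ^ J : ℝ) - 1)) - C e ≤
        Module.finrank ℚ (CyclotomicField e F) * ∑' p, dterm (CyclotomicField e F) (1 + 1 / 2 ^ J) p := by
    rw [Filter.eventually_all_finset]
    intro e _
    exact ht.eventually (hC e)
  filter_upwards [hev] with J hJ h hsum hpos hle
  set s : ℝ := 1 + 1 / 2 ^ J with hs
  have hs1 : 1 < s := by have : (0 : ℝ) < 1 / 2 ^ J := by positivity
                         linarith
  have hlog : Real.log (1 / (s - 1)) = J * Real.log 2 := by
    rw [hs]; simp
  have hD1 : ∀ L : Type _, ∀ [Field L] [NumberField L], ∀ p, dterm L s p ≤ 1 := by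
    intro L _ _ p
    unfold dterm
    split_ifs with hp
    · exact Real.rpow_le_one_of_one_le_of_nonpos (by exact_mod_cast hp.1.one_le) (by linarith)
    · norm_num
  have hpt : ∀ p, ∑ e ∈ K.divisors, (e.totient : ℝ) * (dterm (CyclotomicField e F) s p - b p) ≤ h p := by
    intro p
    by_cases hp : p ∈ bad ∪ K.divisors
    · refine (Finset.sum_nonpos fun e _ => ?_).trans (hpos p)
      simp only [hb, if_pos hp]
      have := hD1 (CyclotomicField e F) p
      exact mul_nonpos_of_nonneg_of_nonpos (by positivity) (by linarith)
    · have hp' := hp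
      simp only [Finset.mem_union, Nat.mem_divisors, not_or, not_and_or, not_not, hK, or_false] at hp'
      simp only [hb, if_neg hp, sub_zero]
      by_cases hF : degOne F p
      · refine le_trans ?_ (hle p hF hp'.1 hp'.2)
        rw [← gcd_eq_sum K (p - 1) hK]
        push_cast
        rw [Finset.sum_mul]
        refine Finset.sum_le_sum fun e he => ?_
        have he' := Nat.mem_divisors.mp he
        unfold dterm
        split_ifs with h1 h2 h2
        · exact le_rfl
        · exact absurd (degOne_cyclo F e (fun h0 => by subst h0; exact hK (zero_dvd_iff.mp he'.1)) p h1 (fun h => hp'.2 (h.trans he'.1))).2 h2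
        · rw [mul_zero]; positivity
        · simp
      · refine (Finset.sum_nonpos fun e he => ?_).trans (hpos p)
        have he' := Nat.mem_divisors.mp he
        unfold dterm
        rw [if_neg, mul_zero]
        intro h1
        exact hF (degOne_cyclo F e (fun h0 => by subst h0; exact hK (zero_dvd_iff.mp he'.1)) p h1 (fun h => hp'.2 (h.trans he'.1))).1
  have hsm : ∀ e ∈ K.divisors, Summable (fun p => (e.totient : ℝ) * (dterm (CyclotomicField e F) s p - b p)) :=
    fun e _ => ((dterm_summable _ hs1).sub hbs).mul_left _
  have h1 := Summable.tsum_le_tsum hpt (summable_sum hsm) hsum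
  rw [Summable.tsum_finsetSum hsm] at h1
  have hd0 : (0 : ℝ) ≤ d := by positivity
  refine le_trans ?_ (mul_le_mul_of_nonneg_left h1 hd0)
  rw [Finset.mul_sum, ← nsmul_eq_mul, ← Finset.sum_const, ← Finset.sum_sub_distrib]
  refine Finset.sum_le_sum fun e he => ?_
  have he' := Nat.mem_divisors.mp he
  rw [tsum_mul_left, Summable.tsum_sub (dterm_summable _ hs1) hbs]
  have h2 := hJ e he
  rw [hlog] at h2
  have h3 : (Module.finrank ℚ (CyclotomicField e F) : ℝ) ≤ d * e.totient := by
    exact_mod_cast finrank_cyclo F e (fun h0 => by subst h0; exact hK (zero_dvd_iff.mp he'.1))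
  have h4 : 0 ≤ ∑' p, dterm (CyclotomicField e F) s p := tsum_nonneg (dterm_nonneg _ s)
  have h5 := mul_le_mul_of_nonneg_right h3 h4
  linarith

theorem NT_B (F : Type*) [Field F] [NumberField F] (R : ℕ) (bad : Finset ℕ) :
    ∃ m : ℕ, 1 ≤ m ∧ ∃ P : Finset ℕ, (∀ p ∈ P, degOne F p ∧ p ∉ bad ∧ p - 1 ∣ m) ∧
      m ^ R < ∏ p ∈ P, p := by
  classical
  by_contra! hcon
  set d := Module.finrank ℚ F with hd
  have hlog2 : 0 < Real.log 2 := Real.log_pos (by norm_num)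
  obtain ⟨T, hT⟩ := exists_nat_gt ((d * (4 * R) + 1) / Real.log 2 : ℝ)
  rw [div_lt_iff₀ hlog2] at hT
  set K := 2 ^ T with hKdef
  have hK : K ≠ 0 := by positivity
  have hcard : K.divisors.card = T + 1 := by
    rw [hKdef, Nat.divisors_prime_pow Nat.prime_two]; simp
  obtain ⟨C, hC⟩ := NT_B_low F bad K hK
  set S : ℕ → Prop := fun p => degOne F p ∧ p ∉ bad ∧ ¬ p ∣ K
  have hB := B3c S (fun p hp => hp.1.1) R (fun m hm P hP => hcon m hm P (fun p hp => ⟨(hP p hp).1.1, (hP p hp).1.2.1, (hP p hp).2⟩)) K hK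
  set c : ℝ := d * (1 + 4 * R + 4 * R * (Real.log K / Real.log 2)) with hc
  have hev : ∀ᶠ J : ℕ in Filter.atTop, (J : ℝ) > c + C := tendsto_natCast_atTop_atTop.eventually_gt_atTop _
  obtain ⟨J, hJ, hJ2⟩ := (hC.and hev).exists
  set h : ℕ → ℝ := fun p => if S p then (Nat.gcd K (p - 1) : ℝ) * (p : ℝ) ^ (-(1 + 1 / 2 ^ J : ℝ)) else 0 with hh
  have hpos : ∀ p, 0 ≤ h p := by
    intro p; simp only [hh]; split_ifs <;> positivity
  have hbd : ∀ N, ∑ p ∈ Finset.range N, h p ≤ 1 + (4 * R * (J + 1) + 4 * R * (Real.log K / Real.log 2)) := by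
    intro N
    refine le_trans ?_ (hB J N)
    rw [Finset.sum_filter]
    have e : (∑ p ∈ Finset.range (2 ^ 2 ^ N + 1), h p) = _ :=
      Finset.sum_congr rfl (g := fun a => if degOne F a ∧ a ∉ bad ∧ ¬ a ∣ K then
        (Nat.gcd K (a - 1) : ℝ) * (a : ℝ) ^ (-(1 + 1 / 2 ^ J : ℝ)) else 0)
        (fun p _ => by simp only [hh, S])
    refine le_trans ?_ (le_of_eq (e.trans (Finset.sum_congr rfl fun p _ => by congr)))
    refine Finset.sum_le_sum_of_subset_of_nonneg (Finset.range_mono ?_) (fun p _ _ => hpos p)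
    have h1 : N < 2 ^ N := Nat.lt_two_pow_self
    have h2 : 2 ^ N < 2 ^ 2 ^ N := Nat.lt_two_pow_self
    omega
  have hsum : Summable h := summable_of_sum_range_le hpos hbd
  have hts := Real.tsum_le_of_sum_range_le hpos hbd
  have hfin := hJ h hsum hpos (fun p h1 h2 h3 => by simp only [hh]; rw [if_pos ⟨h1, h2, h3⟩])
  have hd0 : (0 : ℝ) ≤ d := by positivity
  have := hfin.trans (mul_le_mul_of_nonneg_left hts hd0)
  rw [hcard] at this
  push_cast at this
  have hJ0 : (0 : ℝ) ≤ J := by positivity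
  have h9 : (d * (4 * R) + 1) * (J : ℝ) ≤ T * Real.log 2 * J := mul_le_mul_of_nonneg_right hT.le hJ0
  have h10 : 0 ≤ J * Real.log 2 := by positivity
  rw [hc] at hJ2
  nlinarith

lemma joint_eig {K V ι : Type*} [Field K] [IsAlgClosed K] [AddCommGroup V] [Module K V]
    [FiniteDimensional K V] (f : ι → Module.End K V) (hc : ∀ i j, Commute (f i) (f j))
    (hs : ∀ i, (f i).IsSemisimple) :
    ⨆ χ : ι → K, ⨅ i, (f i).eigenspace (χ i) = ⊤ := by
  have h := Module.End.iSup_iInf_maxGenEigenspace_eq_top_of_iSup_maxGenEigenspace_eq_top_of_commute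
    f (fun i j _ => hc i j) (fun i => Module.End.iSup_maxGenEigenspace_eq_top (f i))
  simpa only [fun i => (Module.End.isFinitelySemisimple_iff_isSemisimple.mpr
    (hs i)).maxGenEigenspace_eq_eigenspace] using h

lemma ss_of_pow {K V : Type*} [Field K] [CharZero K] [AddCommGroup V] [Module K V]
    [FiniteDimensional K V] (f : Module.End K V) (N : ℕ) (hN : N ≠ 0) (h : f ^ N = 1) :
    f.IsSemisimple := by
  refine Module.End.isSemisimple_of_squarefree_aeval_eq_zero
    (p := (Polynomial.X ^ N - 1 : Polynomial K)) ?_ (by simp [h])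
  exact (Polynomial.X_pow_sub_one_separable_iff.mpr (by exact_mod_cast hN)).squarefree

section
set_option linter.unusedSectionVars false
variable {E : Type*} [NormedAddCommGroup E] [InnerProductSpace ℂ E] [FiniteDimensional ℂ E]
  [CompleteSpace E]

lemma unitary_inner (A : unitary (E →L[ℂ] E)) (v w : E) :
    inner ℂ ((A : E →L[ℂ] E) v) ((A : E →L[ℂ] E) w) = inner ℂ v w := by
  rw [← ContinuousLinearMap.adjoint_inner_left, ← ContinuousLinearMap.star_eq_adjoint,
    ← mul_apply_eq_comp, Unitary.coe_star_mul_self]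
  rfl

lemma eig_orth (A : unitary (E →L[ℂ] E)) (v w : E) (a b : ℂ) (hab : a ≠ b)
    (hv : (A : E →L[ℂ] E) v = a • v) (hw : (A : E →L[ℂ] E) w = b • w) : inner ℂ v w = 0 := by
  by_cases hv0 : v = 0
  · simp [hv0]
  have h1 := unitary_inner A v w
  have h2 := unitary_inner A v v
  rw [hv, hw, inner_smul_left, inner_smul_right] at h1
  rw [hv, inner_smul_left, inner_smul_right] at h2
  have hvv : inner ℂ v v ≠ 0 := inner_self_ne_zero.mpr hv0
  have h3 : (starRingEnd ℂ) a * a = 1 := by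
    apply mul_right_cancel₀ hvv; rw [one_mul, mul_assoc]; exact h2
  by_contra hne
  have h4 : (starRingEnd ℂ) a * b = 1 := by
    apply mul_right_cancel₀ hne; rw [one_mul, mul_assoc]; exact h1
  have : (starRingEnd ℂ) a ≠ 0 := left_ne_zero_of_mul_eq_one h3
  exact hab (mul_left_cancel₀ this (h3.trans h4.symm))

lemma comm_of_near (A B : unitary (E →L[ℂ] E)) (N : ℕ) (hN : N ≠ 0) (hA : A ^ N = 1)
    (hc : Commute A (B * A * B⁻¹)) (hB : ‖(B : E →L[ℂ] E) - 1‖ < 1 / 4) : B * A * B⁻¹ = A := by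
  set A' := B * A * B⁻¹ with hA'
  have hA'N : A' ^ N = 1 := by rw [hA', conj_pow, hA]; simp
  let φ : unitary (E →L[ℂ] E) →* Module.End ℂ E :=
    { toFun := fun U => ((U : E →L[ℂ] E) : E →ₗ[ℂ] E), map_one' := rfl, map_mul' := fun _ _ => rfl }
  let f : Bool → Module.End ℂ E := fun i => if i then φ A else φ A'
  have hf := joint_eig f
    (by rintro (_ | _) (_ | _) <;> simp only [f] <;> simp [hc.map φ, (hc.map φ).symm])
    (by
      rintro (_ | _)
      · exact ss_of_pow _ N hN (by simp only [f]; simp [← map_pow, hA'N])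
      · exact ss_of_pow _ N hN (by simp only [f]; simp [← map_pow, hA]))
  have key : φ A' - φ A = 0 := by
    rw [← LinearMap.ker_eq_top, eq_top_iff, ← hf]
    refine iSup_le fun χ => ?_
    intro w hw
    rw [Submodule.mem_iInf] at hw
    have hw1 : (A : E →L[ℂ] E) w = χ true • w := Module.End.mem_eigenspace_iff.mp (hw true)
    have hw2 : (A' : E →L[ℂ] E) w = χ false • w := Module.End.mem_eigenspace_iff.mp (hw false)
    have hgoal : (A' : E →L[ℂ] E) w - (A : E →L[ℂ] E) w = 0 → w ∈ LinearMap.ker (φ A' - φ A) := fun h => h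
    apply hgoal
    by_cases he : χ true = χ false
    · rw [hw1, hw2, he, sub_self]
    suffices w = 0 by simp [this]
    set v := ((B⁻¹ : unitary (E →L[ℂ] E)) : E →L[ℂ] E) w with hv
    have hBv : (B : E →L[ℂ] E) v = w := by
      rw [hv, ← mul_apply_eq_comp, ← Submonoid.coe_mul, mul_inv_cancel]; rfl
    have hAv : (A : E →L[ℂ] E) v = χ false • v := by
      have e : A * B⁻¹ = B⁻¹ * A' := by rw [hA']; group
      have e2 := congrArg (fun U : unitary (E →L[ℂ] E) => (U : E →L[ℂ] E) w) e
      simp only [Submonoid.coe_mul, mul_apply_eq_comp, hw2, map_smul] at e2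
      exact e2
    have horth := eig_orth A v w _ _ (Ne.symm he) hAv hw1
    have hn : ‖w‖ = ‖v‖ := by
      have := unitary_inner B v v
      rw [hBv] at this
      rw [@norm_eq_sqrt_re_inner ℂ, @norm_eq_sqrt_re_inner ℂ _ _ _ _ v, this]
    have h1 : ‖w - v‖ ≤ 1 / 4 * ‖v‖ := by
      have : w - v = ((B : E →L[ℂ] E) - 1) v := by simp [hBv]
      rw [this]
      exact ((B : E →L[ℂ] E) - 1).le_of_opNorm_le hB.le v
    have h2 : ‖w - v‖ * ‖w - v‖ = ‖w‖ * ‖w‖ + ‖v‖ * ‖v‖ := by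
      have := norm_sub_sq (𝕜 := ℂ) w v
      rw [inner_eq_zero_symm.mp horth] at this
      simp only [map_zero, mul_zero, sub_zero] at this
      nlinarith
    have h3 : 0 ≤ ‖w - v‖ := norm_nonneg _
    have h4 : 0 ≤ ‖v‖ := norm_nonneg _
    have h5 : ‖v‖ = 0 := by
      rw [hn] at h2
      have h6 : ‖w - v‖ * ‖w - v‖ ≤ (1 / 4 * ‖v‖) * (1 / 4 * ‖v‖) := mul_self_le_mul_self h3 h1
      nlinarith
    rw [← norm_eq_zero, hn, h5]
  have key2 : φ A' = φ A := sub_eq_zero.mp key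
  ext x
  exact LinearMap.congr_fun key2 x
end


section
set_option linter.unusedSectionVars false
variable {E : Type*} [NormedAddCommGroup E] [InnerProductSpace ℂ E] [FiniteDimensional ℂ E]
  [CompleteSpace E]

lemma comm_norm (A B : unitary (E →L[ℂ] E)) :
    ‖((A * B * A⁻¹ * B⁻¹ : unitary (E →L[ℂ] E)) : E →L[ℂ] E) - 1‖ ≤
      2 * ‖(A : E →L[ℂ] E) - 1‖ * ‖(B : E →L[ℂ] E) - 1‖ := by
  have e : (((A * B * A⁻¹ * B⁻¹ : unitary (E →L[ℂ] E)) : E →L[ℂ] E) - 1) *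
      ((B * A : unitary (E →L[ℂ] E)) : E →L[ℂ] E) =
      ((A : E →L[ℂ] E) - 1) * ((B : E →L[ℂ] E) - 1) - ((B : E →L[ℂ] E) - 1) * ((A : E →L[ℂ] E) - 1) := by
    rw [sub_mul, ← Submonoid.coe_mul]
    have : A * B * A⁻¹ * B⁻¹ * (B * A) = A * B := by group
    rw [this, Submonoid.coe_mul, Submonoid.coe_mul]
    noncomm_ring
  rw [← CStarRing.norm_mul_coe_unitary _ (B * A), e]
  refine (norm_sub_le _ _).trans ?_
  have h1 := norm_mul_le ((A : E →L[ℂ] E) - 1) ((B : E →L[ℂ] E) - 1)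
  have h2 := norm_mul_le ((B : E →L[ℂ] E) - 1) ((A : E →L[ℂ] E) - 1)
  nlinarith

lemma near_commute {G : Type*} [Group G] [Finite G] (U : G →* unitary (E →L[ℂ] E))
    (hU : Function.Injective U) (x : G) (hx : ‖(U x : E →L[ℂ] E) - 1‖ < 1 / 4) (y : G)
    (hy : ‖(U y : E →L[ℂ] E) - 1‖ < 1 / 4) : x * y = y * x := by
  by_contra hne
  let S : Set G := {y | ‖(U y : E →L[ℂ] E) - 1‖ < 1 / 4 ∧ x * y ≠ y * x}
  obtain ⟨z, ⟨hz1, hz2⟩, hmin⟩ := Set.exists_min_image S (fun y => ‖(U y : E →L[ℂ] E) - 1‖)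
    (Set.toFinite S) ⟨y, hy, hne⟩
  have hn : ‖(U (x * z * x⁻¹ * z⁻¹) : E →L[ℂ] E) - 1‖ ≤ 1 / 2 * ‖(U z : E →L[ℂ] E) - 1‖ := by
    have := comm_norm (U x) (U z)
    simp only [map_mul, map_inv]
    refine this.trans ?_
    have : 0 ≤ ‖(U z : E →L[ℂ] E) - 1‖ := norm_nonneg _
    nlinarith
  have h0 : 0 ≤ ‖(U z : E →L[ℂ] E) - 1‖ := norm_nonneg _
  by_cases hc : x * (x * z * x⁻¹ * z⁻¹) = (x * z * x⁻¹ * z⁻¹) * x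
  · apply hz2
    have hcz : Commute x (z * x * z⁻¹) := by
      have h1 : Commute x (x * z * x⁻¹ * z⁻¹) := hc
      have h2 : Commute x (z * x * z⁻¹) := by
        have h3 := ((Commute.refl x).inv_right.mul_right h1).inv_right
        have e : (x⁻¹ * (x * z * x⁻¹ * z⁻¹))⁻¹ = z * x * z⁻¹ := by group
        rwa [e] at h3
      exact h2
    have h4 := comm_of_near (U x) (U z) (Nat.card G) Nat.card_pos.ne'
      (by rw [← map_pow, pow_card_eq_one', map_one])
      (by simpa only [map_mul, map_inv] using hcz.map U) hz1
    have h5 : z * x * z⁻¹ = x := hU (by simpa only [map_mul, map_inv] using h4)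
    rw [mul_inv_eq_iff_eq_mul] at h5
    exact h5.symm
  · have h6 := hmin (x * z * x⁻¹ * z⁻¹) ⟨by linarith, hc⟩
    have h7 : ‖(U z : E →L[ℂ] E) - 1‖ = 0 := by linarith
    rw [norm_eq_zero, sub_eq_zero] at h7
    have h8 : U z = U 1 := by rw [map_one]; exact Subtype.ext h7
    have h9 := hU h8
    subst h9
    simp at hz2

end

lemma jordan_unitary (E : Type*) [NormedAddCommGroup E] [InnerProductSpace ℂ E]
    [FiniteDimensional ℂ E] [CompleteSpace E] : ∃ J : ℕ, ∀ (G : Type) [Group G] [Finite G]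
    (U : G →* unitary (E →L[ℂ] E)), Function.Injective U →
    ∃ B : Subgroup G, (∀ x ∈ B, ∀ y ∈ B, x * y = y * x) ∧ B.index ≤ J := by
  have : ProperSpace (E →L[ℂ] E) := FiniteDimensional.proper ℂ _
  obtain ⟨t, -, htf, htc⟩ := (isCompact_closedBall (0 : E →L[ℂ] E) 1).finite_cover_balls
    (show (0 : ℝ) < 1 / 8 by norm_num)
  refine ⟨t.ncard, fun G _ _ U hU => ?_⟩
  set N : Set G := {g | ‖(U g : E →L[ℂ] E) - 1‖ < 1 / 4} with hN
  refine ⟨Subgroup.closure N, ?_, ?_⟩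
  · have := Subgroup.isMulCommutative_closure (k := N) (fun x hx y hy => near_commute U hU x hx y hy)
    intro x hx y hy
    exact congrArg Subtype.val (this.is_comm.comm ⟨x, hx⟩ ⟨y, hy⟩)
  · have hcov : ∀ q : G ⧸ Subgroup.closure N, ∃ z : t, ‖(U q.out : E →L[ℂ] E) - z‖ < 1 / 8 := by
      intro q
      have h1 : (U q.out : E →L[ℂ] E) ∈ Metric.closedBall (0 : E →L[ℂ] E) 1 := by
        rw [mem_closedBall_zero_iff]
        rw [← mul_one (U q.out : E →L[ℂ] E), CStarRing.norm_coe_unitary_mul]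
        exact ContinuousLinearMap.norm_id_le
      have h2 := htc h1
      simp only [Set.mem_iUnion] at h2
      obtain ⟨z, hz, h3⟩ := h2
      exact ⟨⟨z, hz⟩, by rwa [mem_ball_iff_norm] at h3⟩
    choose z hz using hcov
    rw [Subgroup.index, Set.ncard_def, Set.encard] 
    have : Finite t := htf
    refine Nat.card_le_card_of_injective z ?_
    intro q r hqr
    rw [← q.out_eq, ← r.out_eq, QuotientGroup.eq]
    apply Subgroup.subset_closure
    change ‖(U (q.out⁻¹ * r.out) : E →L[ℂ] E) - 1‖ < 1 / 4
    have h1 := hz q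
    have h2 := hz r
    rw [← hqr] at h2
    rw [← CStarRing.norm_coe_unitary_mul (U q.out), mul_sub, ← Submonoid.coe_mul, ← map_mul,
      mul_inv_cancel_left, mul_one]
    calc ‖(U r.out : E →L[ℂ] E) - U q.out‖
        = ‖((U r.out : E →L[ℂ] E) - z q) - ((U q.out : E →L[ℂ] E) - z q)‖ := by congr 1; abel
      _ ≤ _ := norm_sub_le _ _
      _ < _ := by linarith


section
open Matrix
open scoped MatrixOrder ComplexOrder

lemma unitarize {n : ℕ} {G : Type} [Group G] [Finite G] (ρ : G →* GL (Fin n) ℂ) :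
    ∃ V : G →* unitary (Matrix (Fin n) (Fin n) ℂ), ∀ g, V g = 1 → ρ g = 1 := by
  classical
  have := Fintype.ofFinite G
  set P : Matrix (Fin n) (Fin n) ℂ := ∑ g, (ρ g : Matrix (Fin n) (Fin n) ℂ)ᴴ * ρ g with hP
  have hPD : P.PosDef := by
    rw [hP, ← Finset.add_sum_erase _ _ (Finset.mem_univ 1)]
    refine Matrix.PosDef.add_posSemidef ?_ ?_
    · simpa using Matrix.PosDef.one
    · exact Matrix.posSemidef_sum _ (fun g _ => Matrix.posSemidef_conjTranspose_mul_self _)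
  obtain ⟨B, hB⟩ := CStarAlgebra.nonneg_iff_eq_star_mul_self.mp
    (Matrix.nonneg_iff_posSemidef.mpr hPD.posSemidef)
  have hBu : IsUnit B.det := by
    have h1 : IsUnit P.det := (Matrix.isUnit_iff_isUnit_det _).mp hPD.isUnit
    rw [hB, Matrix.det_mul] at h1
    exact isUnit_of_mul_isUnit_right h1
  have hBB : B⁻¹ * B = 1 := Matrix.nonsing_inv_mul _ hBu
  have hBB' : B * B⁻¹ = 1 := Matrix.mul_nonsing_inv _ hBu
  have hinv : ∀ g, star (ρ g : Matrix (Fin n) (Fin n) ℂ) * P * ρ g = P := by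
    intro g
    conv_rhs => rw [hP, ← Equiv.sum_comp (Equiv.mulRight g)]
    rw [hP, Finset.mul_sum, Finset.sum_mul]
    refine Finset.sum_congr rfl fun h _ => ?_
    simp only [Equiv.coe_mulRight, map_mul, Units.val_mul, Matrix.conjTranspose_mul,
      Matrix.star_eq_conjTranspose, Matrix.mul_assoc]
  let V : G →* Matrix (Fin n) (Fin n) ℂ :=
    { toFun := fun g => B * ρ g * B⁻¹
      map_one' := by simp [hBB']
      map_mul' := fun g h => by
        simp only [map_mul, Units.val_mul]
        calc B * ((ρ g : Matrix (Fin n) (Fin n) ℂ) * ρ h) * B⁻¹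
            = B * (ρ g : Matrix (Fin n) (Fin n) ℂ) * 1 * ρ h * B⁻¹ := by
              rw [mul_one]; simp only [mul_assoc]
          _ = _ := by rw [← hBB]; simp only [mul_assoc] }
  have hV1 : ∀ g, star (V g) * V g = 1 := by
    intro g
    change star (B * ρ g * B⁻¹) * (B * ρ g * B⁻¹) = 1
    calc star (B * ρ g * B⁻¹) * (B * ρ g * B⁻¹)
        = star B⁻¹ * (star (ρ g : Matrix (Fin n) (Fin n) ℂ) * (star B * B) * ρ g) * B⁻¹ := by
          simp only [star_mul, mul_assoc]
      _ = star B⁻¹ * (star B * B) * B⁻¹ := by rw [← hB, hinv]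
      _ = star (B * B⁻¹) * (B * B⁻¹) := by simp only [star_mul, mul_assoc]
      _ = 1 := by rw [hBB']; simp
  refine ⟨V.codRestrict (unitary _) (fun g => ?_), fun g hg => ?_⟩
  · rw [Unitary.mem_iff]
    exact ⟨hV1 g, mul_eq_one_comm.mp (hV1 g)⟩
  · have h1 : V g = 1 := congrArg Subtype.val hg
    have h2 : B * ρ g * B⁻¹ = 1 := h1
    have h3 : (ρ g : Matrix (Fin n) (Fin n) ℂ) = 1 := by
      calc (ρ g : Matrix (Fin n) (Fin n) ℂ) = (B⁻¹ * B) * ρ g * (B⁻¹ * B) := by rw [hBB]; simp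
        _ = B⁻¹ * (B * ρ g * B⁻¹) * B := by simp only [mul_assoc]
        _ = 1 := by rw [h2, mul_one, hBB]
    exact Units.ext h3

theorem jordan_complex (n : ℕ) : ∃ J : ℕ, ∀ (G : Type) [Group G] [Finite G]
    (ρ : G →* GL (Fin n) ℂ), Function.Injective ρ →
    ∃ B : Subgroup G, (∀ x ∈ B, ∀ y ∈ B, x * y = y * x) ∧ B.index ≤ J := by
  obtain ⟨J, hJ⟩ := jordan_unitary (EuclideanSpace ℂ (Fin n))
  refine ⟨J, fun G _ _ ρ hρ => ?_⟩
  obtain ⟨V, hV⟩ := unitarize ρ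
  let T := Matrix.toEuclideanCLM (n := Fin n) (𝕜 := ℂ)
  let W : unitary (Matrix (Fin n) (Fin n) ℂ) →*
      unitary (EuclideanSpace ℂ (Fin n) →L[ℂ] EuclideanSpace ℂ (Fin n)) :=
    { toFun := fun A => ⟨T A, Unitary.map_mem T A.2⟩
      map_one' := Subtype.ext (map_one T)
      map_mul' := fun A B => Subtype.ext (map_mul T _ _) }
  refine hJ G (W.comp V) ?_
  rw [injective_iff_map_eq_one]
  intro g hg
  have h1 : Matrix.toEuclideanCLM (n := Fin n) (𝕜 := ℂ) (V g : Matrix (Fin n) (Fin n) ℂ) = 1 :=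
    congrArg Subtype.val hg
  have h2 : (V g : Matrix (Fin n) (Fin n) ℂ) = 1 := by
    exact (EquivLike.injective T) (h1.trans (map_one T).symm)
  exact hρ ((hV g (Subtype.ext h2)).trans (map_one ρ).symm)
end


lemma lift_level {n : ℕ} {A B : Type} [CommRing A] [CommRing B] [Finite A] [Finite B] (φ : A →+* B)
    (hs : Function.Surjective φ) (hl : ∀ a, IsUnit (φ a) → IsUnit a) (p m : ℕ) (hp : p.Prime)
    (hA : Nat.card A = p ^ m) (H : Subgroup (GL (Fin n) B)) (hH : ¬ p ∣ Nat.card H) :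
    ∃ s : H →* GL (Fin n) A, ∀ h, Matrix.GeneralLinearGroup.map φ (s h) = h := by
  classical
  let Φ : GL (Fin n) A →* GL (Fin n) B := Matrix.GeneralLinearGroup.map φ
  have hΦval : ∀ g : GL (Fin n) A, (Φ g : Matrix (Fin n) (Fin n) B) =
    φ.mapMatrix (g : Matrix (Fin n) (Fin n) A) := fun g => rfl
  have hunit : ∀ M : Matrix (Fin n) (Fin n) A, IsUnit (φ.mapMatrix M) → IsUnit M := by
    intro M hM
    rw [Matrix.isUnit_iff_isUnit_det] at hM ⊢
    apply hl
    rwa [RingHom.map_det]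
  have hsurj : Function.Surjective Φ := by
    intro g
    choose c hc using hs
    let M : Matrix (Fin n) (Fin n) A := Matrix.of fun i j => c ((g : Matrix (Fin n) (Fin n) B) i j)
    have hM : φ.mapMatrix M = g := by ext i j; simp [M, hc]
    have hu := hunit M (hM ▸ g.isUnit)
    exact ⟨hu.unit, Units.ext (by rw [hΦval]; exact hM)⟩
  let L := H.comap Φ
  let π : L →* H := (Φ.comp L.subtype).codRestrict H (fun x => x.2)
  have hπ : Function.Surjective π := by
    rintro ⟨h, hh⟩
    obtain ⟨g, rfl⟩ := hsurj h
    exact ⟨⟨g, hh⟩, rfl⟩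
  let Z : AddSubgroup (Matrix (Fin n) (Fin n) A) := (φ.mapMatrix : Matrix (Fin n) (Fin n) A →+* Matrix (Fin n) (Fin n) B).toAddMonoidHom.ker
  have hcard : Nat.card π.ker ∣ p ^ (m * (n * n)) := by
    have e1 : Nat.card π.ker = Nat.card Z := by
      refine Nat.card_congr (Equiv.ofBijective (fun x => ⟨((x : L) : GL (Fin n) A).1 - 1, ?_⟩) ⟨?_, ?_⟩)
      · have h1 : Φ ((x : L) : GL (Fin n) A) = 1 := congrArg Subtype.val x.2
        have h2 := congrArg Units.val h1
        rw [hΦval] at h2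
        change φ.mapMatrix _ = 0
        rw [map_sub, h2, map_one]; simp
      · intro x y hxy
        have := congrArg Subtype.val hxy
        simp only [sub_left_inj] at this
        exact Subtype.ext (Subtype.ext (Units.ext this))
      · rintro ⟨X, hX⟩
        have hX' : φ.mapMatrix X = 0 := hX
        have hu : IsUnit (1 + X) := hunit _ (by rw [map_add, hX', map_one, add_zero]; exact isUnit_one)
        have h1 : Φ hu.unit = 1 := Units.ext (by
          rw [hΦval, IsUnit.unit_spec, map_add, hX', map_one, add_zero]; rfl)
        refine ⟨⟨⟨hu.unit, ?_⟩, ?_⟩, ?_⟩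
        · change Φ hu.unit ∈ H
          rw [h1]; exact H.one_mem
        · exact Subtype.ext h1
        · ext; simp
    rw [e1]
    have e2 : Nat.card (Matrix (Fin n) (Fin n) A) = p ^ (m * (n * n)) := by
      rw [show Matrix (Fin n) (Fin n) A = (Fin n → Fin n → A) from rfl]
      simp only [Nat.card_fun, Nat.card_fin]
      simp [hA, pow_mul]
    rw [← e2]
    exact AddSubgroup.card_addSubgroup_dvd_card Z
  have hidx : π.ker.index = Nat.card H := by
    rw [Subgroup.index_ker, MonoidHom.range_eq_top.mpr hπ]
    exact Subgroup.card_top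
  have hcop : Nat.Coprime (Nat.card π.ker) π.ker.index := by
    rw [hidx]
    refine Nat.Coprime.coprime_dvd_left hcard ?_
    exact Nat.Coprime.pow_left _ ((Nat.Prime.coprime_iff_not_dvd hp).mpr hH)
  obtain ⟨C, hC⟩ := Subgroup.exists_right_complement'_of_coprime hcop
  let f : C →* H := π.comp C.subtype
  have hf : Function.Bijective f := by
    constructor
    · rw [injective_iff_map_eq_one]
      intro c hc
      have h1 : (c : L) ∈ π.ker ⊓ C := ⟨hc, c.2⟩
      rw [hC.disjoint.eq_bot] at h1
      exact Subtype.ext h1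
    · intro h
      obtain ⟨l, rfl⟩ := hπ h
      obtain ⟨⟨a, c⟩, hac⟩ := hC.2 l
      refine ⟨c, ?_⟩
      have ha : π a = 1 := a.2
      simp only at hac
      rw [← hac, map_mul, ha, one_mul]; rfl
  let e := MulEquiv.ofBijective f hf
  refine ⟨(L.subtype.comp C.subtype).comp e.symm.toMonoidHom, fun h => ?_⟩
  have := e.apply_symm_apply h
  exact congrArg Subtype.val this


lemma toZModPow_closed (p : ℕ) [Fact p.Prime] (m : ℕ) (s : Set (ZMod (p ^ m))) :
    IsClosed ((PadicInt.toZModPow (p := p) m) ⁻¹' s) := by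
  have h : IsLocallyConstant (PadicInt.toZModPow (p := p) m) := by
    rw [IsLocallyConstant.iff_eventually_eq]
    intro x
    have hpos : (0 : ℝ) < (p : ℝ) ^ (-m : ℤ) := by
      have : (0 : ℝ) < p := by exact_mod_cast (Fact.out : p.Prime).pos
      positivity
    filter_upwards [Metric.ball_mem_nhds x hpos] with y hy
    rw [mem_ball_iff_norm] at hy
    have h1 := (PadicInt.norm_le_pow_iff_mem_span_pow (y - x) m).mp hy.le
    rw [← PadicInt.ker_toZModPow, RingHom.mem_ker, map_sub, sub_eq_zero] at h1
    exact h1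
  rw [← isOpen_compl_iff, ← Set.preimage_compl]
  exact h _

lemma zmod_unit_lift (p m : ℕ) (hp : p.Prime) (hm : m ≠ 0) (a : ZMod (p ^ m))
    (h : IsUnit (ZMod.castHom (dvd_pow_self p hm) (ZMod p) a)) : IsUnit a := by
  have : NeZero (p ^ m) := ⟨pow_ne_zero _ hp.ne_zero⟩
  have : Fact p.Prime := ⟨hp⟩
  obtain ⟨k, rfl⟩ := ZMod.natCast_zmod_surjective a
  rw [map_natCast, ZMod.isUnit_iff_coprime] at h
  rw [ZMod.isUnit_iff_coprime]
  exact Nat.Coprime.pow_right _ h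

lemma lift_padic {n : ℕ} (p : ℕ) [Fact p.Prime] (H : Subgroup (GL (Fin n) (ZMod p)))
    (hH : ¬ p ∣ Nat.card H) :
    ∃ f : H →* Matrix (Fin n) (Fin n) ℤ_[p], Function.Injective f := by
  classical
  have hp : p.Prime := Fact.out
  let c : ∀ m : ℕ, ZMod (p ^ (m + 1)) →+* ZMod p := fun m => ZMod.castHom (dvd_pow_self p (Nat.succ_ne_zero m)) (ZMod p)
  let τ : ∀ m : ℕ, ℤ_[p] →+* ZMod (p ^ (m + 1)) := fun m => PadicInt.toZModPow (m + 1)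
  let C : ℕ → Set (H → Matrix (Fin n) (Fin n) ℤ_[p]) := fun m =>
    {f | (∀ x y i j, τ m (f (x * y) i j) - τ m ((f x * f y) i j) = 0) ∧ (∀ i j, τ m (f 1 i j) = (1 : Matrix (Fin n) (Fin n) _) i j) ∧
      ∀ x i j, c m (τ m (f x i j)) = (x : GL (Fin n) (ZMod p)).1 i j}
  have hev : ∀ (x : H) (i j : Fin n), Continuous
      (fun f : H → Matrix (Fin n) (Fin n) ℤ_[p] => f x i j) := fun x i j =>
    (continuous_apply_apply i j).comp (continuous_apply x)
  have hclosed : ∀ m, IsClosed (C m) := by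
    intro m
    have hC : C m = (⋂ x, ⋂ y, ⋂ i, ⋂ j, {f | τ m (f (x * y) i j) - τ m ((f x * f y) i j) = 0}) ∩
        ((⋂ i, ⋂ j, {f | τ m (f 1 i j) = (1 : Matrix (Fin n) (Fin n) _) i j}) ∩
        (⋂ x : H, ⋂ i, ⋂ j, {f | c m (τ m (f x i j)) = (x : GL (Fin n) (ZMod p)).1 i j})) := by
      ext f
      simp only [Set.mem_inter_iff, Set.mem_iInter]
      rfl
    rw [hC]
    refine IsClosed.inter ?_ (IsClosed.inter ?_ ?_)
    · refine isClosed_iInter fun x => isClosed_iInter fun y => isClosed_iInter fun i =>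
        isClosed_iInter fun j => ?_
      have h1 : Continuous (fun f : H → Matrix (Fin n) (Fin n) ℤ_[p] =>
          f (x * y) i j - (f x * f y) i j) := by
        refine (hev _ _ _).sub ?_
        simp only [Matrix.mul_apply]
        exact continuous_finsetSum _ fun k _ => (hev _ _ _).mul (hev _ _ _)
      have h2 := (toZModPow_closed p (m + 1) {0}).preimage h1
      convert h2 using 1
      ext f
      simp [τ]
    · refine isClosed_iInter fun i => isClosed_iInter fun j => ?_
      exact (toZModPow_closed p (m + 1) {(1 : Matrix (Fin n) (Fin n) _) i j}).preimage (hev 1 i j)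
    · refine isClosed_iInter fun x => isClosed_iInter fun i => isClosed_iInter fun j => ?_
      exact (toZModPow_closed p (m + 1) {w | c m w = (x : GL (Fin n) (ZMod p)).1 i j}).preimage (hev x i j)
  have hne : (⋂ m, C m).Nonempty := by
    apply IsCompact.nonempty_iInter_of_sequence_nonempty_isCompact_isClosed
    · intro m f hf
      let d : ZMod (p ^ (m + 1 + 1)) →+* ZMod (p ^ (m + 1)) :=
        ZMod.castHom (pow_dvd_pow p (Nat.le_succ _)) (ZMod (p ^ (m + 1)))
      have hd : ∀ z, τ m z = d (τ (m + 1) z) := fun z =>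
        (congrFun (congrArg DFunLike.coe (PadicInt.zmod_cast_comp_toZModPow (p := p) (m + 1) (m + 1 + 1) (Nat.le_succ _))) z).symm
      have hc : ∀ z, c m (d z) = c (m + 1) z := fun z =>
        congrFun (congrArg DFunLike.coe (Subsingleton.elim ((c m).comp d) (c (m + 1)))) z
      refine ⟨fun x y i j => ?_, fun i j => ?_, fun x i j => ?_⟩
      · rw [hd, hd, ← map_sub, hf.1, map_zero]
      · rw [hd, hf.2.1]
        simp only [Matrix.one_apply]
        split_ifs <;> simp
      · rw [hd, hc, hf.2.2]
    · intro m
      have : NeZero (p ^ (m + 1)) := ⟨pow_ne_zero _ hp.ne_zero⟩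
      obtain ⟨s, hs⟩ := lift_level (c m) (ZMod.ringHom_surjective _)
        (fun a ha => zmod_unit_lift p (m + 1) hp (Nat.succ_ne_zero m) a ha) p (m + 1) hp
        (Nat.card_zmod _) H hH
      choose r hr using ZMod.ringHom_surjective (τ m)
      refine ⟨fun x => Matrix.of fun i j => r ((s x).1 i j), fun x y i j => ?_, fun i j => ?_, fun x i j => ?_⟩
      · simp only [Matrix.of_apply, hr, Matrix.mul_apply, map_sum, map_mul, Units.val_mul, sub_self]
      · simp only [Matrix.of_apply, hr, map_one, Units.val_one]
      · simp only [Matrix.of_apply, hr]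
        rw [← hs x]; rfl
    · have : CompactSpace (Matrix (Fin n) (Fin n) ℤ_[p]) :=
        inferInstanceAs (CompactSpace (Fin n → Fin n → ℤ_[p]))
      exact (hclosed 0).isCompact
    · exact hclosed
  obtain ⟨f, hf⟩ := hne
  rw [Set.mem_iInter] at hf
  have hext : ∀ z w : ℤ_[p], (∀ m, τ m z = τ m w) → z = w := by
    intro z w h
    rw [← PadicInt.ext_of_toZModPow]
    intro m
    cases m with
    | zero => have : Subsingleton (ZMod (p ^ 0)) := by rw [pow_zero]; infer_instance
              exact Subsingleton.elim _ _
    | succ m => exact h m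
  refine ⟨{ toFun := f, map_one' := ?_, map_mul' := fun x y => ?_ }, ?_⟩
  · ext i j
    refine hext _ _ fun m => ?_
    rw [(hf m).2.1]
    simp only [Matrix.one_apply]
    split_ifs <;> simp
  · ext i j
    exact hext _ _ fun m => sub_eq_zero.mp ((hf m).1 x y i j)
  · intro x y hxy
    have hxy' : f x = f y := hxy
    apply Subtype.ext; apply Units.ext; ext i j
    rw [← (hf 0).2.2 x i j, hxy', (hf 0).2.2 y i j]


section
open Cardinal

lemma padic_embed (p : ℕ) [Fact p.Prime] : ∃ e : ℤ_[p] →+* ℂ, Function.Injective e := by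
  have h1 : #ℚ_[p] ≤ 𝔠 := by
    have hq : Function.Surjective (fun s : CauSeq ℚ (padicNorm p) => (Quotient.mk _ s : ℚ_[p])) :=
      Quotient.mk_surjective
    have h2 : #ℚ_[p] ≤ #(CauSeq ℚ (padicNorm p)) := mk_le_of_surjective hq
    have h3 : #(CauSeq ℚ (padicNorm p)) ≤ #(ℕ → ℚ) := mk_le_of_injective Subtype.val_injective
    have h4 : #(ℕ → ℚ) = 𝔠 := by simp
    exact h2.trans (h3.trans h4.le)
  have h2 : 𝔠 ≤ #ℚ_[p] := continuum_le_cardinal_of_nontriviallyNormedField ℚ_[p]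
  have h3 : #(AlgebraicClosure ℚ_[p]) = 𝔠 := by
    apply le_antisymm
    · refine (Algebra.IsAlgebraic.cardinalMk_le_max ℚ_[p] (AlgebraicClosure ℚ_[p])).trans ?_
      exact max_le h1 aleph0_le_continuum
    · exact h2.trans (mk_le_of_injective (algebraMap ℚ_[p] (AlgebraicClosure ℚ_[p])).injective)
  have : CharZero (AlgebraicClosure ℚ_[p]) := algebraRat.charZero _
  obtain ⟨e⟩ := IsAlgClosed.ringEquiv_of_equiv_of_charZero (K := AlgebraicClosure ℚ_[p]) (L := ℂ)
    (by rw [h3]; exact aleph0_lt_continuum) (Cardinal.eq.mp (by rw [h3]; exact Cardinal.mk_complex.symm))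
  exact ⟨(e.toRingHom.comp (algebraMap ℚ_[p] _)).comp PadicInt.Coe.ringHom,
    (e.injective.comp (algebraMap ℚ_[p] _).injective).comp Subtype.val_injective⟩
end

theorem jordan_modp (n : ℕ) : ∃ J : ℕ, ∀ p : ℕ, p.Prime → ∀ H : Subgroup (GL (Fin n) (ZMod p)),
    ¬ p ∣ Nat.card H → ∃ B : Subgroup H, (∀ x ∈ B, ∀ y ∈ B, x * y = y * x) ∧ B.index ≠ 0 ∧ B.index ≤ J := by
  obtain ⟨J, hJ⟩ := jordan_complex n
  refine ⟨J, fun p hp H hH => ?_⟩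
  have : Fact p.Prime := ⟨hp⟩
  obtain ⟨f, hf⟩ := lift_padic p H hH
  obtain ⟨e, he⟩ := padic_embed p
  have hinj : Function.Injective (e.mapMatrix (m := Fin n)) := by
    intro M N h
    ext i j
    exact he (congrFun (congrFun h i) j)
  let F : H →* Matrix (Fin n) (Fin n) ℂ := (e.mapMatrix (m := Fin n)).toMonoidHom.comp f
  obtain ⟨B, hB, hBJ⟩ := hJ H F.toHomUnits (fun x y h => hf (hinj (congrArg Units.val h)))
  exact ⟨B, hB, Subgroup.FiniteIndex.index_ne_zero, hBJ⟩


open IsDedekindDomain in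
lemma sunits_fg (F : Type*) [Field F] [NumberField F] (D : 𝓞 F) (hD : D ≠ 0) :
    Group.FG (Localization.Away D)ˣ := by
  classical
  have hDF : algebraMap (𝓞 F) F D ≠ 0 := by
    rwa [Ne, FaithfulSMul.algebraMap_eq_zero_iff]
  let ι : Localization.Away D →+* F :=
    IsLocalization.Away.lift D (g := algebraMap (𝓞 F) F) (isUnit_iff_ne_zero.mpr hDF)
  have hι : ∀ a, ι (algebraMap (𝓞 F) _ a) = algebraMap (𝓞 F) F a := fun a =>
    IsLocalization.Away.lift_eq D _ a
  have hrep : ∀ x : Localization.Away D, ∃ (a : 𝓞 F) (k : ℕ),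
      x * algebraMap (𝓞 F) _ (D ^ k) = algebraMap (𝓞 F) _ a := by
    intro x
    obtain ⟨⟨a, ⟨_, ⟨k, rfl⟩⟩⟩, h⟩ := IsLocalization.surj (Submonoid.powers D) x
    exact ⟨a, k, h⟩
  have hDu : ∀ k, IsUnit (algebraMap (𝓞 F) (Localization.Away D) (D ^ k)) := fun k =>
    IsLocalization.map_units _ (⟨D ^ k, k, rfl⟩ : Submonoid.powers D)
  have hinj : Function.Injective ι := by
    rw [injective_iff_map_eq_zero]
    intro x hx
    obtain ⟨a, k, h⟩ := hrep x
    have h1 := congrArg ι h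
    rw [map_mul, hx, zero_mul, hι] at h1
    have h2 : a = 0 := by
      rwa [eq_comm, FaithfulSMul.algebraMap_eq_zero_iff] at h1
    rw [h2, map_zero] at h
    exact (hDu k).mul_left_eq_zero.mp h
  let ιu : (Localization.Away D)ˣ →* Fˣ := Units.map (ι : Localization.Away D →* F)
  let S := {v : HeightOneSpectrum (𝓞 F) // D ∈ v.asIdeal}
  have hfin : Finite S := by
    have h1 := HeightOneSpectrum.Support.finite (R := 𝓞 F) (algebraMap (𝓞 F) F D)⁻¹
    refine Set.Finite.subset h1 (fun v hv => ?_)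
    have h2 := (v.valuation_lt_one_iff_mem (K := F) D).mpr hv
    change 1 < v.valuation F (algebraMap (𝓞 F) F D)⁻¹
    rw [map_inv₀]
    have h3 : v.valuation F (algebraMap (𝓞 F) F D) ≠ 0 := (Valuation.ne_zero_iff _).mpr hDF
    exact (one_lt_inv₀ (zero_lt_iff.mpr h3)).mpr h2
  have hle : ∀ v : HeightOneSpectrum (𝓞 F), D ∉ v.asIdeal → ∀ x, v.valuation F (ι x) ≤ 1 := by
    intro v hv x
    obtain ⟨a, k, h⟩ := hrep x
    have h1 := congrArg (fun z => v.valuation F (ι z)) h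
    simp only [map_mul, hι, map_pow] at h1
    rw [(v.valuation_eq_one_iff_notMem (K := F)).mpr hv, one_pow, mul_one] at h1
    rw [h1]
    exact v.valuation_le_one a
  let f : (Localization.Away D)ˣ →* (S → Multiplicative ℤ) :=
    MonoidHom.pi (fun v => (v.1.valuationOfNeZero).comp ιu)
  let g : (𝓞 F)ˣ →* (Localization.Away D)ˣ := Units.map (algebraMap (𝓞 F) (Localization.Away D) : 𝓞 F →* _)
  have hker : ∀ u, f u = 1 → ∃ w, g w = u := by
    intro u hu
    have hle1 : ∀ v : HeightOneSpectrum (𝓞 F), v.valuation F (ι u) ≤ 1 ∧ v.valuation F (ι (u⁻¹ : (Localization.Away D)ˣ)) ≤ 1 := by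
      intro v
      by_cases hv : D ∈ v.asIdeal
      · have h1 : v.valuationOfNeZero (ιu u) = 1 := congrFun hu ⟨v, hv⟩
        have h2 : v.valuationOfNeZero (ιu u⁻¹) = 1 := by rw [map_inv, map_inv, h1, inv_one]
        have h3 := v.valuationOfNeZero_eq (ιu u)
        have h4 := v.valuationOfNeZero_eq (ιu u⁻¹)
        rw [h1] at h3
        rw [h2] at h4
        exact ⟨h3.symm.le, h4.symm.le⟩
      · exact ⟨hle v hv _, hle v hv _⟩
    obtain ⟨a, ha⟩ := HeightOneSpectrum.mem_integers_of_valuation_le_one F _ (fun v => (hle1 v).1)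
    obtain ⟨b, hb⟩ := HeightOneSpectrum.mem_integers_of_valuation_le_one F _ (fun v => (hle1 v).2)
    have hab : a * b = 1 := by
      apply FaithfulSMul.algebraMap_injective (𝓞 F) F
      rw [map_mul, ha, hb, ← map_mul, ← Units.val_mul, mul_inv_cancel, Units.val_one, map_one, map_one]
    refine ⟨⟨a, b, hab, by rw [mul_comm]; exact hab⟩, Units.ext (hinj ?_)⟩
    change ι (algebraMap _ _ a) = _
    rw [hι, ha]
  rw [GroupFG.iff_add_fg, ← Module.Finite.iff_addGroup_fg, Module.finite_def]
  let f1 : Additive (Localization.Away D)ˣ →+ (S → ℤ) :=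
    { toFun := fun u v => (f u.toMul v).toAdd
      map_zero' := by ext v; simp
      map_add' := fun a b => by ext v; simp }
  refine Submodule.fg_of_fg_map_of_fg_inf_ker f1.toIntLinearMap (IsNoetherian.noetherian _) ?_
  let g1 := (MonoidHom.toAdditive g).toIntLinearMap
  have hN : IsNoetherian ℤ (LinearMap.range g1) := by
    have : IsNoetherian ℤ (Additive (𝓞 F)ˣ) := inferInstance
    exact isNoetherian_of_surjective g1.rangeRestrict (LinearMap.range_rangeRestrict _)
  refine isNoetherian_submodule.mp hN _ ?_
  rintro u ⟨-, hu⟩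
  have hu' : f1 u = 0 := hu
  obtain ⟨w, hw⟩ := hker u.toMul (by
    ext v
    have := congrFun hu' v
    exact this)
  exact ⟨Additive.ofMul w, congrArg Additive.ofMul hw⟩


/-- invertible diagonal matrix. -/
noncomputable def diagU {n : ℕ} {R : Type*} [CommRing R] (d : Fin n → Rˣ) : GL (Fin n) R :=
  Units.map (Matrix.diagonalRingHom (Fin n) R).toMonoidHom (MulEquiv.piUnits.symm d)

lemma diagU_val {n : ℕ} {R : Type*} [CommRing R] (d : Fin n → Rˣ) :
    (diagU d : Matrix (Fin n) (Fin n) R) = Matrix.diagonal (fun i => (d i : R)) := rfl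

lemma diagU_map {n : ℕ} {R S : Type*} [CommRing R] [CommRing S] (f : R →+* S) (d : Fin n → Rˣ) :
    Matrix.GeneralLinearGroup.map f (diagU d) = diagU (fun i => Units.map (f : R →* S) (d i)) := by
  apply Units.ext
  ext i j
  simp only [Matrix.GeneralLinearGroup.map_apply, diagU_val, Matrix.diagonal_apply]
  split_ifs <;> simp

lemma core1 (F : Type*) [Field F] [NumberField F] (D : 𝓞 F) (hD : D ≠ 0) {n k : ℕ}
    {G : Type*} [Group G] (ρ : G →* GL (Fin n) (Localization.Away D))
    (A : Fin k → Subgroup G) (Q : Fin k → GL (Fin n) (Localization.Away D))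
    (hdiag : ∀ i, ∀ a ∈ A i, ∃ d, ρ a = Q i * diagU d * (Q i)⁻¹)
    (hcov : ∀ x : G, ∃ a : Fin k → G, (∀ i, a i ∈ A i) ∧ x = (List.ofFn a).prod) :
    ∃ p : ℕ, p.Prime ∧ ∃ ψ : Localization.Away D →+* ZMod p,
      ¬ p ∣ Nat.card ((Matrix.GeneralLinearGroup.map ψ).comp ρ).range := by
  classical
  by_contra hcon
  push Not at hcon
  have := sunits_fg F D hD
  let O := Localization.Away D
  set r := Group.rank Oˣ with hr
  let N := Ideal.absNorm (Ideal.span {D})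
  have hN : N ≠ 0 := by
    rw [Ne, Ideal.absNorm_eq_zero_iff, Ideal.span_singleton_eq_bot]
    exact hD
  obtain ⟨m, hm, P, hP, hlt⟩ := NT_B F (r * n * k) N.primeFactors
  have hex : ∀ p : P, ∃ ψ : O →+* ZMod p.1, True := by
    intro p
    obtain ⟨⟨hp, ⟨π⟩⟩, hbad, -⟩ := hP p.1 p.2
    have : Fact p.1.Prime := ⟨hp⟩
    have hu : IsUnit (π D) := by
      rw [isUnit_iff_ne_zero]
      intro h0
      apply hbad
      rw [Nat.mem_primeFactors]
      refine ⟨hp, ?_, hN⟩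
      have h1 : ((N : ℕ) : 𝓞 F) ∈ Ideal.span {D} := Ideal.absNorm_mem _
      obtain ⟨c, hc⟩ := Ideal.mem_span_singleton.mp h1
      have h2 := congrArg π hc
      rw [map_natCast, map_mul, h0, zero_mul] at h2
      exact (ZMod.natCast_eq_zero_iff _ _).mp h2
    exact ⟨IsLocalization.Away.lift D hu, trivial⟩
  choose ψ _ using hex
  have hpr : ∀ p : P, Fact p.1.Prime := fun p => ⟨(hP p.1 p.2).1.1⟩
  let Φ : G →* (∀ p : P, GL (Fin n) (ZMod p.1)) :=
    MonoidHom.pi (fun p => (Matrix.GeneralLinearGroup.map (ψ p)).comp ρ)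
  let υ : Oˣ →* (∀ p : P, (ZMod p.1)ˣ) :=
    MonoidHom.pi (fun p => Units.map (ψ p : O →* ZMod p.1))
  have hfW : Finite υ.range := inferInstance
  have hW : Nat.card υ.range ≤ m ^ r := by
    have h1 : Nat.card υ.range ∣ m ^ Group.rank υ.range := by
      apply card_dvd_exponent_pow_rank'
      rintro ⟨g, hg⟩
      apply Subtype.ext
      change g ^ m = 1
      ext p
      obtain ⟨c, hc⟩ := (hP p.1 p.2).2.2
      rw [hc, Pi.pow_apply, pow_mul, ZMod.units_pow_card_sub_one_eq_one, one_pow]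
      rfl
    have h2 : Group.rank υ.range ≤ r := Group.rank_le_of_surjective υ.rangeRestrict υ.rangeRestrict_surjective
    exact (Nat.le_of_dvd (pow_pos hm _) h1).trans (Nat.pow_le_pow_right hm h2)
  let Ψ : (Fin k → Fin n → υ.range) → (∀ p : P, GL (Fin n) (ZMod p.1)) := fun w =>
    (List.ofFn (fun i => (fun p : P => Matrix.GeneralLinearGroup.map (ψ p) (Q i) *
      diagU (fun j => (w i j).1 p) * (Matrix.GeneralLinearGroup.map (ψ p) (Q i))⁻¹ :
        ∀ p : P, GL (Fin n) (ZMod p.1)))).prod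
  have hsub : (Φ.range : Set (∀ p : P, GL (Fin n) (ZMod p.1))) ⊆ Set.range Ψ := by
    rintro _ ⟨x, rfl⟩
    obtain ⟨a, ha, rfl⟩ := hcov x
    choose d hd using fun i => hdiag i (a i) (ha i)
    refine ⟨fun i j => ⟨υ (d i j), d i j, rfl⟩, ?_⟩
    rw [map_list_prod, List.map_ofFn]
    change (List.ofFn _).prod = _
    congr 2
    funext i
    funext p
    change _ = Matrix.GeneralLinearGroup.map (ψ p) (ρ (a i))
    rw [hd, map_mul, map_mul, map_inv, diagU_map]
    rfl
  have hX : Nat.card Φ.range ≤ m ^ (r * n * k) := by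
    calc Nat.card Φ.range ≤ Nat.card (Set.range Ψ) :=
          Nat.card_mono (Set.toFinite _) hsub
      _ ≤ Nat.card (Fin k → Fin n → υ.range) := Finite.card_range_le Ψ
      _ = (Nat.card υ.range ^ n) ^ k := by simp
      _ ≤ ((m ^ r) ^ n) ^ k := by gcongr
      _ = _ := by rw [← pow_mul, ← pow_mul, mul_assoc]
  have hdvd : ∏ p ∈ P, p ∣ Nat.card Φ.range := by
    apply Finset.prod_primes_dvd
    · intro p hp
      exact (hP p hp).1.1.prime
    · intro p hp
      refine (hcon p (hP p hp).1.1 (ψ ⟨p, hp⟩)).trans ?_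
      let e : Φ.range →* ((Matrix.GeneralLinearGroup.map (ψ ⟨p, hp⟩)).comp ρ).range :=
        ((Pi.evalMonoidHom _ (⟨p, hp⟩ : P)).comp Φ.range.subtype).codRestrict _ (by
          rintro ⟨_, x, rfl⟩
          exact ⟨x, rfl⟩)
      refine Subgroup.card_dvd_of_surjective e ?_
      rintro ⟨_, x, rfl⟩
      exact ⟨⟨Φ x, x, rfl⟩, rfl⟩
  have := Nat.le_of_dvd Nat.card_pos hdvd
  omega


lemma spec_field.{u} (A : Type u) [CommRing A] [Nontrivial A] [Algebra ℚ A]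
    [Algebra.FiniteType ℚ A] :
    ∃ (F : Type u) (_ : Field F) (_ : NumberField F), Nonempty (A →+* F) := by
  obtain ⟨M, hM⟩ := Ideal.exists_maximal A
  have hft2 : Algebra.FiniteType ℚ (A ⧸ M) :=
    Algebra.FiniteType.of_surjective (Ideal.Quotient.mkₐ ℚ M) Ideal.Quotient.mk_surjective
  let i1 : Field (A ⧸ M) := Ideal.Quotient.field M
  have hfin : Module.Finite ℚ (A ⧸ M) :=
    @finite_of_finite_type_of_isJacobsonRing ℚ (A ⧸ M) _ i1 (Ideal.Quotient.algebra ℚ) _ hft2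
  have hcz : CharZero (A ⧸ M) := algebraRat.charZero (A ⧸ M)
  refine ⟨A ⧸ M, i1, { to_charZero := hcz, to_finiteDimensional := ?_ }, ⟨Ideal.Quotient.mk M⟩⟩
  have hsub : (Ideal.Quotient.algebra ℚ : Algebra ℚ (A ⧸ M)) = DivisionRing.toRatAlgebra :=
    Subsingleton.elim _ _
  rw [← hsub]
  exact hfin

lemma factor_loc {L : Type*} [Field L] (s : Finset L) {F : Type*} [Field F] [NumberField F]
    (φ : Algebra.adjoin ℤ (s : Set L) →+* F) : ∃ D : 𝓞 F, D ≠ 0 ∧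
      Nonempty (Algebra.adjoin ℤ (s : Set L) →+* Localization.Away D) := by
  classical
  let R := Algebra.adjoin ℤ (s : Set L)
  let t : Finset F := s.attach.image (fun x => φ ⟨x.1, Algebra.subset_adjoin x.2⟩)
  obtain ⟨⟨D, hD⟩, hb⟩ := IsLocalization.exist_integer_multiples_of_finset (nonZeroDivisors (𝓞 F)) t
  have hD0 : D ≠ 0 := nonZeroDivisors.ne_zero hD
  refine ⟨D, hD0, ?_⟩
  have hDF : algebraMap (𝓞 F) F D ≠ 0 := by
    rwa [Ne, FaithfulSMul.algebraMap_eq_zero_iff]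
  let ι : Localization.Away D →+* F :=
    IsLocalization.Away.lift D (g := algebraMap (𝓞 F) F) (isUnit_iff_ne_zero.mpr hDF)
  have hι : ∀ a, ι (algebraMap (𝓞 F) _ a) = algebraMap (𝓞 F) F a := fun a =>
    IsLocalization.Away.lift_eq D _ a
  have hDu : ∀ k, IsUnit (algebraMap (𝓞 F) (Localization.Away D) (D ^ k)) := fun k =>
    IsLocalization.map_units _ (⟨D ^ k, k, rfl⟩ : Submonoid.powers D)
  have hinj : Function.Injective ι := by
    rw [injective_iff_map_eq_zero]
    intro x hx
    obtain ⟨⟨a, ⟨_, ⟨k, rfl⟩⟩⟩, h⟩ := IsLocalization.surj (Submonoid.powers D) x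
    have h1 := congrArg ι h
    rw [map_mul, hx, zero_mul, hι] at h1
    have h2 : a = 0 := by
      rwa [eq_comm, FaithfulSMul.algebraMap_eq_zero_iff] at h1
    simp only [h2, map_zero] at h
    exact (hDu k).mul_left_eq_zero.mp h
  have hrange : ∀ x : R, φ x ∈ ι.range := by
    rintro ⟨x, hx⟩
    induction hx using Algebra.adjoin_induction with
    | mem x hx =>
      obtain ⟨b, hb'⟩ := hb (φ ⟨x, Algebra.subset_adjoin hx⟩)
        (Finset.mem_image.mpr ⟨⟨x, hx⟩, Finset.mem_attach _ _, rfl⟩)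
      obtain ⟨u, hu⟩ := hDu 1
      rw [pow_one] at hu
      refine ⟨algebraMap (𝓞 F) _ b * (u⁻¹ : (Localization.Away D)ˣ), ?_⟩
      have h3 : ι (algebraMap (𝓞 F) _ D) * ι (u⁻¹ : (Localization.Away D)ˣ) = 1 := by
        rw [← hu, ← map_mul, Units.mul_inv, map_one]
      rw [hι] at h3
      have h4 : algebraMap (𝓞 F) F b = algebraMap (𝓞 F) F D * φ ⟨x, Algebra.subset_adjoin hx⟩ := by
        rw [hb', Algebra.smul_def]
      rw [map_mul, hι, h4]
      linear_combination (φ ⟨x, Algebra.subset_adjoin hx⟩) * h3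
    | algebraMap r =>
      have : φ (algebraMap ℤ R r) = (r : F) := by simp
      change φ (algebraMap ℤ R r) ∈ _
      rw [this]
      exact intCast_mem _ _
    | add x y hx hy h1 h2 =>
      exact (map_add φ ⟨x, hx⟩ ⟨y, hy⟩) ▸ add_mem h1 h2
    | mul x y hx hy h1 h2 =>
      exact (map_mul φ ⟨x, hx⟩ ⟨y, hy⟩) ▸ mul_mem h1 h2
  exact ⟨((RingEquiv.ofBijective ι.rangeRestrict ⟨fun a b h => hinj (congrArg Subtype.val h), ι.rangeRestrict_surjective⟩).symm : ι.range →+* _).comp (φ.codRestrict ι.range hrange)⟩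

lemma adjoin_int_sub_rat {L : Type*} [Field L] [CharZero L] (s : Set L) (x : L)
    (hx : x ∈ Algebra.adjoin ℤ s) : x ∈ Algebra.adjoin ℚ s := by
  induction hx using Algebra.adjoin_induction with
  | mem x hx => exact Algebra.subset_adjoin hx
  | algebraMap r =>
    rw [eq_intCast]
    exact intCast_mem _ _
  | add x y hx hy h1 h2 => exact add_mem h1 h2
  | mul x y hx hy h1 h2 => exact mul_mem h1 h2

lemma specialize_nf.{u} {L : Type u} [Field L] [CharZero L] (s : Finset L) :
    ∃ (F : Type u) (_ : Field F) (_ : NumberField F) (D : 𝓞 F), D ≠ 0 ∧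
      Nonempty (Algebra.adjoin ℤ (s : Set L) →+* Localization.Away D) := by
  have hft : Algebra.FiniteType ℚ (Algebra.adjoin ℚ (s : Set L)) :=
    (Subalgebra.fg_iff_finiteType _).mp (Subalgebra.fg_adjoin_finset s)
  obtain ⟨F, _, hnf, ⟨π⟩⟩ := spec_field (Algebra.adjoin ℚ (s : Set L))
  obtain ⟨D, hD⟩ := factor_loc s (π.comp
    ((Algebra.adjoin ℤ (s : Set L)).val.toRingHom.codRestrict (Algebra.adjoin ℚ (s : Set L))
      (fun x => adjoin_int_sub_rat _ x.1 x.2)))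
  exact ⟨F, _, hnf, D, hD⟩


lemma core2 {L : Type*} [Field L] [CharZero L] (s : Finset L) (R : Subalgebra ℤ L) (hR : R = Algebra.adjoin ℤ (s : Set L)) {n k : ℕ}
    {G : Type*} [Group G] (ρ : G →* GL (Fin n) R)
    (A : Fin k → Subgroup G) (Q : Fin k → GL (Fin n) R)
    (hdiag : ∀ i, ∀ a ∈ A i, ∃ d, ρ a = Q i * diagU d * (Q i)⁻¹)
    (hcov : ∀ x : G, ∃ a : Fin k → G, (∀ i, a i ∈ A i) ∧ x = (List.ofFn a).prod) :
    ∃ p : ℕ, p.Prime ∧ ∃ ψ : R →+* ZMod p,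
      ¬ p ∣ Nat.card ((Matrix.GeneralLinearGroup.map ψ).comp ρ).range := by
  subst hR
  obtain ⟨F, _, _, D, hD, ⟨θ⟩⟩ := specialize_nf s
  obtain ⟨p, hp, ψ, hψ⟩ := core1 F D hD ((Matrix.GeneralLinearGroup.map θ).comp ρ) A
    (fun i => Matrix.GeneralLinearGroup.map θ (Q i)) (by
      intro i a ha
      obtain ⟨d, hd⟩ := hdiag i a ha
      exact ⟨_, by rw [MonoidHom.comp_apply, hd, map_mul, map_mul, map_inv, diagU_map]⟩) hcov
  refine ⟨p, hp, ψ.comp θ, ?_⟩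
  have : (Matrix.GeneralLinearGroup.map (n := Fin n) (ψ.comp θ)).comp ρ
      = (Matrix.GeneralLinearGroup.map ψ).comp ((Matrix.GeneralLinearGroup.map θ).comp ρ) := by
    rfl
  rw [this]
  exact hψ

lemma ss_ext {K L : Type*} [Field K] [CharZero K] [Field L] [Algebra K L] {n : ℕ}
    (M : Matrix (Fin n) (Fin n) K) (h : Module.End.IsSemisimple M.mulVecLin) :
    Module.End.IsSemisimple (M.map (algebraMap K L)).mulVecLin := by
  have hsq := h.minpoly_squarefree
  have hsep : (minpoly K M.mulVecLin).Separable := PerfectField.separable_iff_squarefree.mpr hsq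
  refine Module.End.isSemisimple_of_squarefree_aeval_eq_zero
    (p := (minpoly K M.mulVecLin).map (algebraMap K L)) hsep.map.squarefree ?_
  have h1 : Polynomial.aeval M (minpoly K M.mulVecLin) = 0 := by
    have : minpoly K M.mulVecLin = minpoly K M := Matrix.minpoly_toLin' M
    rw [this]; exact minpoly.aeval _ _
  have h2 : Polynomial.aeval (M.map (algebraMap K L)) ((minpoly K M.mulVecLin).map (algebraMap K L)) = 0 := by
    have h3 := congrArg (AlgHom.mapMatrix (m := Fin n) (Algebra.ofId K L)) h1
    rw [map_zero, ← Polynomial.aeval_algHom_apply] at h3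
    rw [Polynomial.aeval_map_algebraMap]
    exact h3
  have h4 := congrArg (Matrix.toLinAlgEquiv' (R := L) (n := Fin n)) h2
  rw [map_zero, ← Polynomial.aeval_algHom_apply] at h4
  exact h4

lemma simdiag {L ι : Type*} [Field L] [IsAlgClosed L] {n : ℕ} (g : ι → GL (Fin n) L)
    (hc : ∀ i j, g i * g j = g j * g i)
    (hs : ∀ i, Module.End.IsSemisimple ((g i : Matrix (Fin n) (Fin n) L).mulVecLin)) :
    ∃ Q : GL (Fin n) L, ∀ i, ∃ d, g i = Q * diagU d * Q⁻¹ := by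
  classical
  have hc' : ∀ i j, Commute ((g i : Matrix (Fin n) (Fin n) L).mulVecLin)
      ((g j : Matrix (Fin n) (Fin n) L).mulVecLin) := by
    intro i j
    change _ ∘ₗ _ = _ ∘ₗ _
    rw [← Matrix.mulVecLin_mul, ← Matrix.mulVecLin_mul, ← Units.val_mul, hc, Units.val_mul]
  have hj := joint_eig (fun i => (g i : Matrix (Fin n) (Fin n) L).mulVecLin) hc' hs
  let E : (ι → L) → Submodule L (Fin n → L) := fun χ =>
    ⨅ i, Module.End.eigenspace ((g i : Matrix (Fin n) (Fin n) L).mulVecLin) (χ i)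
  let t : Set (Fin n → L) := ⋃ χ, (E χ : Set (Fin n → L))
  have ht : Submodule.span L t = ⊤ := by
    rw [← hj, Submodule.span_iUnion]
    simp only [Submodule.span_eq]
    rfl
  obtain ⟨b, hbt, hspan, hli⟩ := exists_linearIndependent L t
  let B : Module.Basis b L (Fin n → L) := Module.Basis.mk hli (by
    rw [Subtype.range_coe, hspan, ht])
  have hfin : Finite b := Module.Finite.finite_basis B
  have : Fintype b := Fintype.ofFinite b
  have hcard : Fintype.card b = n := by
    rw [← Module.finrank_eq_card_basis B, Module.finrank_fin_fun]
  let e : b ≃ Fin n := Fintype.equivFinOfCardEq hcard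
  let M : Matrix (Fin n) (Fin n) L := Matrix.of (fun i j => (e.symm j : Fin n → L) i)
  have hM : IsUnit M := by
    rw [← Matrix.linearIndependent_cols_iff_isUnit]
    exact hli.comp e.symm e.symm.injective
  obtain ⟨Q, hQ⟩ := hM
  have hmem : ∀ j, ∃ χ, ((e.symm j : b) : Fin n → L) ∈ E χ := fun j => by
    simpa [t] using hbt (e.symm j).2
  choose χ hχ using hmem
  have hev : ∀ i j, (g i : Matrix (Fin n) (Fin n) L) *ᵥ ((e.symm j : b) : Fin n → L)
      = χ j i • ((e.symm j : b) : Fin n → L) := by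
    intro i j
    have := (Submodule.mem_iInf _).mp (hχ j) i
    exact Module.End.mem_eigenspace_iff.mp this
  have hne : ∀ j i, χ j i ≠ 0 := by
    intro j i h0
    have h1 := hev i j
    rw [h0, zero_smul] at h1
    have h2 : ((g i)⁻¹ : GL (Fin n) L).val *ᵥ ((g i : Matrix (Fin n) (Fin n) L) *ᵥ ((e.symm j : b) : Fin n → L)) = 0 := by
      rw [h1, Matrix.mulVec_zero]
    rw [Matrix.mulVec_mulVec, ← Units.val_mul, inv_mul_cancel, Units.val_one, Matrix.one_mulVec] at h2
    exact hli.ne_zero (e.symm j) h2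
  refine ⟨Q, fun i => ⟨fun j => Units.mk0 (χ j i) (hne j i), ?_⟩⟩
  rw [eq_mul_inv_iff_mul_eq]
  apply Units.ext
  rw [Units.val_mul, Units.val_mul, diagU_val, hQ]
  ext a j
  have := congrFun (hev i j) a
  rw [Matrix.mul_diagonal]
  simp only [Units.val_mk0, M, Matrix.of_apply]
  rw [mul_comm]
  exact this

lemma lift_GL {n : ℕ} {R L : Type*} [CommRing R] [CommRing L] (ι : R →+* L)
    (hι : Function.Injective ι) (g : GL (Fin n) L) (h1 : ∀ i j, (g : Matrix (Fin n) (Fin n) L) i j ∈ ι.range)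
    (h2 : ∀ i j, ((g⁻¹ : GL (Fin n) L) : Matrix (Fin n) (Fin n) L) i j ∈ ι.range) :
    g ∈ (Matrix.GeneralLinearGroup.map (n := Fin n) ι).range := by
  choose a ha using h1
  choose b hb using h2
  let a' : Matrix (Fin n) (Fin n) R := Matrix.of a
  let b' : Matrix (Fin n) (Fin n) R := Matrix.of b
  have ha' : a'.map ι = g := by ext i j; exact ha i j
  have hb' : b'.map ι = (g⁻¹ : GL (Fin n) L) := by ext i j; exact hb i j
  have hinj : Function.Injective (fun M : Matrix (Fin n) (Fin n) R => M.map ι) := Matrix.map_injective hι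
  refine ⟨⟨a', b', hinj ?_, hinj ?_⟩, Units.ext ha'⟩
  · simp only [Matrix.map_mul, ha', hb', ← Units.val_mul, mul_inv_cancel, Units.val_one]
    simp
  · simp only [Matrix.map_mul, ha', hb', ← Units.val_mul, inv_mul_cancel, Units.val_one]
    simp

lemma map_GL_inj {n : ℕ} {R L : Type*} [CommRing R] [CommRing L] (ι : R →+* L)
    (hι : Function.Injective ι) :
    Function.Injective (Matrix.GeneralLinearGroup.map (n := Fin n) ι) := by
  intro x y h
  apply Units.ext
  apply Matrix.map_injective hι
  exact congrArg Units.val h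

lemma lift_diag {n : ℕ} {R L : Type*} [CommRing R] [CommRing L] (ι : R →+* L)
    (hι : Function.Injective ι) (h : GL (Fin n) R) (d : Fin n → Lˣ)
    (hd : Matrix.GeneralLinearGroup.map ι h = diagU d) : ∃ d', h = diagU d' := by
  have h1 : ∀ i j, ι ((h : Matrix (Fin n) (Fin n) R) i j) = Matrix.diagonal (fun i => (d i : L)) i j := by
    intro i j
    have := congrArg (fun u : GL (Fin n) L => (u : Matrix (Fin n) (Fin n) L) i j) hd
    exact this
  have hd2 : Matrix.GeneralLinearGroup.map ι h⁻¹ = diagU (fun i => (d i)⁻¹) := by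
    rw [map_inv, hd]
    symm
    apply eq_inv_of_mul_eq_one_left
    apply Units.ext
    rw [Units.val_mul, diagU_val, diagU_val, Matrix.diagonal_mul_diagonal]
    simp
  have h2 : ∀ i j, ι (((h⁻¹ : GL (Fin n) R) : Matrix (Fin n) (Fin n) R) i j)
      = Matrix.diagonal (fun i => ((d i)⁻¹ : Lˣ).val) i j := by
    intro i j
    have := congrArg (fun u : GL (Fin n) L => (u : Matrix (Fin n) (Fin n) L) i j) hd2
    exact this
  have h3 : ∀ i, (h : Matrix (Fin n) (Fin n) R) i i * ((h⁻¹ : GL (Fin n) R) : Matrix (Fin n) (Fin n) R) i i = 1 := by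
    intro i
    apply hι
    rw [map_mul, h1, h2, map_one]
    simp
  refine ⟨fun i => ⟨_, _, h3 i, by rw [mul_comm]; exact h3 i⟩, ?_⟩
  apply Units.ext
  apply Matrix.map_injective hι
  ext i j
  change ι ((h : Matrix (Fin n) (Fin n) R) i j) = ι (Matrix.diagonal (fun i => (h : Matrix (Fin n) (Fin n) R) i i) i j)
  rw [h1]
  by_cases hij : i = j
  · subst hij
    simp [h1]
  · simp [hij]


lemma small_index (G : Type*) [Group G] [hG : Group.FG G] (J : ℕ) :
    ∃ N : Subgroup G, N.FiniteIndex ∧ ∀ H : Subgroup G, H.index ≠ 0 → H.index ≤ J → N ≤ H := by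
  classical
  obtain ⟨S, hS⟩ := hG.out
  have hfin : Finite (G →* Equiv.Perm (Fin J)) := by
    refine Finite.of_injective (β := S → Equiv.Perm (Fin J)) (fun f s => f s.1) ?_
    intro f g h
    refine MonoidHom.eq_of_eqOn_dense hS (fun x hx => ?_)
    exact congrFun h ⟨x, hx⟩
  refine ⟨⨅ f : G →* Equiv.Perm (Fin J), f.ker, Subgroup.finiteIndex_iInf (fun f => inferInstance), ?_⟩
  intro H h0 hJ
  have hfi : H.FiniteIndex := ⟨h0⟩
  have : Fintype (G ⧸ H) := Fintype.ofFinite _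
  have hle : Fintype.card (G ⧸ H) ≤ Fintype.card (Fin J) := by
    rw [Fintype.card_fin, ← Nat.card_eq_fintype_card]
    exact hJ
  obtain ⟨e⟩ := Function.Embedding.nonempty_of_card_le hle
  refine (iInf_le _ ((Equiv.Perm.viaEmbeddingHom e).comp (MulAction.toPermHom G (G ⧸ H)))).trans ?_
  intro x hx
  have h1 : MulAction.toPermHom G (G ⧸ H) x = 1 := by
    apply Equiv.Perm.viaEmbeddingHom_injective e
    rw [map_one]
    exact hx
  have h2 : x ∈ H.normalCore := by
    rw [Subgroup.normalCore_eq_ker]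
    exact h1
  exact H.normalCore_le h2

theorem main_aux {K : Type*} [Field K] [CharZero K] {n : ℕ} (Γ : Subgroup (GL (Fin n) K))
    (hfg : Group.FG ↥Γ)
    (hani : ∀ g ∈ Γ, Module.End.IsSemisimple ((g : Matrix (Fin n) (Fin n) K).mulVecLin)) (k : ℕ)
    (A : Fin k → Subgroup (GL (Fin n) K)) (hle : ∀ i, A i ≤ Γ)
    (hab : ∀ i, ∀ x ∈ A i, ∀ y ∈ A i, x * y = y * x)
    (hprod : ∀ x ∈ Γ, ∃ a : Fin k → GL (Fin n) K, (∀ i, a i ∈ A i) ∧ x = (List.ofFn a).prod) :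
    ∃ H : Subgroup Γ, H.FiniteIndex ∧ ∀ x ∈ H, ∀ y ∈ H, x * y = y * x := by
  classical
  obtain ⟨J, hJ⟩ := jordan_modp n
  obtain ⟨N, hN, hNle⟩ := small_index Γ J
  refine ⟨N, hN, fun x hx y hy => ?_⟩
  by_contra hxy
  let L := AlgebraicClosure K
  have hcz : CharZero L := charZero_of_injective_algebraMap (algebraMap K L).injective
  let β : GL (Fin n) K →* GL (Fin n) L := Matrix.GeneralLinearGroup.map (algebraMap K L)
  have hβ : Function.Injective β := map_GL_inj _ (algebraMap K L).injective
  have hQ : ∀ i, ∃ Q : GL (Fin n) L, ∀ a : A i, ∃ d, β a.1 = Q * diagU d * Q⁻¹ := by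
    intro i
    refine simdiag (fun a : A i => β a.1) (fun a b => ?_) (fun a => ?_)
    · rw [← map_mul, hab i a.1 a.2 b.1 b.2, map_mul]
    · exact ss_ext _ (hani a.1 (hle i a.2))
  choose Q hQ using hQ
  obtain ⟨S, hS⟩ := hfg.out
  -- a nonzero entry of the commutator difference
  have hne : ((x * y : Γ) : GL (Fin n) K) ≠ ((y * x : Γ) : GL (Fin n) K) := fun h =>
    hxy (Subtype.ext h)
  have hne2 : ∃ i j, ((β (x * y : Γ).1 : GL (Fin n) L) : Matrix (Fin n) (Fin n) L) i j -
      ((β (y * x : Γ).1 : GL (Fin n) L) : Matrix (Fin n) (Fin n) L) i j ≠ 0 := by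
    by_contra hcon
    push Not at hcon
    apply hne
    apply hβ
    apply Units.ext
    ext i j
    exact sub_eq_zero.mp (hcon i j)
  obtain ⟨i0, j0, hf⟩ := hne2
  set f := ((β (x * y : Γ).1 : GL (Fin n) L) : Matrix (Fin n) (Fin n) L) i0 j0 -
      ((β (y * x : Γ).1 : GL (Fin n) L) : Matrix (Fin n) (Fin n) L) i0 j0 with hfdef
  let ent : GL (Fin n) L → Finset L := fun g =>
    (Finset.univ.image (fun ij : Fin n × Fin n => (g : Matrix (Fin n) (Fin n) L) ij.1 ij.2)) ∪
    (Finset.univ.image (fun ij : Fin n × Fin n => ((g⁻¹ : GL (Fin n) L) : Matrix (Fin n) (Fin n) L) ij.1 ij.2))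
  let s : Finset L := insert f⁻¹ (S.biUnion (fun g => ent (β g.1)) ∪ Finset.univ.biUnion (fun i => ent (Q i)))
  obtain ⟨R, hR⟩ : ∃ R : Subalgebra ℤ L, R = Algebra.adjoin ℤ (s : Set L) := ⟨_, rfl⟩
  have hsR : ∀ z ∈ s, z ∈ R := fun z hz => hR ▸ Algebra.subset_adjoin (Finset.mem_coe.mpr hz)
  let ι : R →+* L := R.val.toRingHom
  have hι : Function.Injective ι := Subtype.val_injective
  have hent : ∀ g, ent g ⊆ s → g ∈ (Matrix.GeneralLinearGroup.map (n := Fin n) ι).range := by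
    intro g hg
    apply lift_GL ι hι
    · intro i j
      refine ⟨⟨_, hsR _ ((hg (Finset.mem_union_left _
        (Finset.mem_image.mpr ⟨(i, j), Finset.mem_univ _, rfl⟩))))⟩, rfl⟩
    · intro i j
      refine ⟨⟨_, hsR _ ((hg (Finset.mem_union_right _
        (Finset.mem_image.mpr ⟨(i, j), Finset.mem_univ _, rfl⟩))))⟩, rfl⟩
  have hQ' : ∀ i, ∃ q, Matrix.GeneralLinearGroup.map (n := Fin n) ι q = Q i := by
    intro i
    refine hent (Q i) (fun z hz => ?_)
    exact Finset.mem_insert_of_mem (Finset.mem_union_right _ (Finset.mem_biUnion.mpr ⟨i, Finset.mem_univ _, hz⟩))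
  choose q hq using hQ'
  have hΓ : ∀ g : Γ, β g.1 ∈ (Matrix.GeneralLinearGroup.map (n := Fin n) ι).range := by
    have h1 : (⊤ : Subgroup Γ) ≤ (Matrix.GeneralLinearGroup.map (n := Fin n) ι).range.comap (β.comp Γ.subtype) := by
      rw [← hS, Subgroup.closure_le]
      intro g hg
      refine hent (β g.1) (fun z hz => ?_)
      exact Finset.mem_insert_of_mem (Finset.mem_union_left _ (Finset.mem_biUnion.mpr ⟨g, hg, hz⟩))
    exact fun g => h1 (Subgroup.mem_top g)
  let ρ : Γ →* GL (Fin n) R :=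
    ((MonoidHom.ofInjective (map_GL_inj (n := n) ι hι)).symm.toMonoidHom).comp
      ((β.comp Γ.subtype).codRestrict _ hΓ)
  have hρ : ∀ g, Matrix.GeneralLinearGroup.map ι (ρ g) = β g.1 := by
    intro g
    exact congrArg Subtype.val ((MonoidHom.ofInjective (map_GL_inj (n := n) ι hι)).apply_symm_apply
      ⟨β g.1, hΓ g⟩)
  obtain ⟨p, hp, ψ, hψ⟩ := core2 s R hR ρ (fun i => (A i).comap Γ.subtype) q (by
    intro i a ha
    obtain ⟨d, hd⟩ := hQ i ⟨a.1, ha⟩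
    obtain ⟨d', hd'⟩ := lift_diag ι hι ((q i)⁻¹ * ρ a * q i) d (by
      rw [map_mul, map_mul, map_inv, hq, hρ, hd]
      group)
    refine ⟨d', ?_⟩
    rw [← hd']
    group) (by
    intro g
    obtain ⟨a, ha, hga⟩ := hprod g.1 g.2
    refine ⟨fun i => ⟨a i, hle i (ha i)⟩, ha, ?_⟩
    apply Subtype.ext
    rw [hga]
    change _ = Γ.subtype _
    rw [map_list_prod, List.map_ofFn]
    rfl)
  obtain ⟨B, hBc, hB0, hBJ⟩ := hJ p hp _ hψ
  let σ := ((Matrix.GeneralLinearGroup.map (n := Fin n) ψ).comp ρ).rangeRestrict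
  have hσ : Function.Surjective σ := MonoidHom.rangeRestrict_surjective _
  have hidx : (B.comap σ).index = B.index := Subgroup.index_comap_of_surjective B hσ
  have hNB : N ≤ B.comap σ := hNle _ (hidx ▸ hB0) (hidx ▸ hBJ)
  have hcomm : σ (x * y) = σ (y * x) := by
    rw [map_mul, map_mul]
    exact hBc _ (hNB hx) _ (hNB hy)
  have hcomm2 : Matrix.GeneralLinearGroup.map ψ (ρ (x * y)) = Matrix.GeneralLinearGroup.map ψ (ρ (y * x)) :=
    congrArg Subtype.val hcomm
  have hcomm3 : ψ ((ρ (x * y) : Matrix (Fin n) (Fin n) R) i0 j0) = ψ ((ρ (y * x) : Matrix (Fin n) (Fin n) R) i0 j0) :=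
    congrArg (fun u : GL (Fin n) (ZMod p) => (u : Matrix (Fin n) (Fin n) (ZMod p)) i0 j0) hcomm2
  let f' : R := (ρ (x * y) : Matrix (Fin n) (Fin n) R) i0 j0 - (ρ (y * x) : Matrix (Fin n) (Fin n) R) i0 j0
  have hψf : ψ f' = 0 := by rw [map_sub, hcomm3, sub_self]
  have hιf : ι f' = f := by
    rw [map_sub, hfdef, ← hρ, ← hρ]
    rfl
  let w : R := ⟨f⁻¹, hsR _ ((Finset.mem_insert_self _ _))⟩
  have hfw : f' * w = 1 := by
    apply hι
    rw [map_mul, hιf, map_one]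
    exact mul_inv_cancel₀ hf
  have : Fact p.Prime := ⟨hp⟩
  have h10 := congrArg ψ hfw
  rw [map_mul, hψf, zero_mul, map_one] at h10
  exact zero_ne_one h10

end NTPart

/-- A finitely generated anisotropic linear group over a field of characteristic zero that is
a product of finitely many abelian subgroups is virtually abelian. -/
theorem stmt_14 {K : Type*} [Field K] [CharZero K] {n : ℕ} (hn : 1 ≤ n)
    (Γ : Subgroup (GL (Fin n) K)) (hfg : Group.FG ↥Γ)
    (hani : ∀ g ∈ Γ, IsSemisimpleElt g)
    (k : ℕ) (A : Fin k → Subgroup (GL (Fin n) K))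
    (hle : ∀ i, A i ≤ Γ)
    (hab : ∀ i, ∀ x ∈ A i, ∀ y ∈ A i, x * y = y * x)
    (hprod : ∀ x ∈ Γ, ∃ a : Fin k → GL (Fin n) K,
      (∀ i, a i ∈ A i) ∧ x = (List.ofFn a).prod) :
    IsVirtuallyAbelian ↥Γ := by
  obtain ⟨H, hH, hc⟩ := main_aux Γ hfg hani k A hle hab hprod
  exact ⟨H, hH, fun x y => Subtype.ext (hc x.1 x.2 y.1 y.2)⟩
end
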